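/- arXiv:0904.2547 — 3 statements merged into one kernel-verified Lean document; each statement's English description precedes it below -/
import Mathlib

section
/- Let γ > 0, ε > 0, and let u₀ : ℝ → ℝ be twice continuously differentiable with u₀ ∈ L¹(ℝ) ∩ L²(ℝ) ∩ L∞(ℝ), and set Q = ∫_ℝ u₀² dx, E = ∫_ℝ [ γ (∫_{−∞}^x u₀)² + (1/3) u₀³ ] dx, and C = (√γ/√2) ( E + γ Q + (1/3) Q ‖u₀‖_{L∞} )^{1/2}. Let T₁ be the smallest positive root of 2√γ T₁ ( ‖u₀‖_{L∞} + C T₁ + (γ Q/6) T₁² )^{1/2} = log(1 + 2/ε), and assume there exists x₀ ∈ ℝ with u₀'(x₀) ≤ −(1+ε) √γ ( ‖u₀‖_{L∞} + C T₁ + (γ Q/6) T₁² )^{1/2}. Then wave breaking occurs before T₁: every decaying classical solution u of the Ostrovsky–Hunter equation on the line on [0,T) with u(0,·) = u₀, with v(t,·) square-integrable and vanishing at ±∞, and with u_x bounded from below on [0,T) × ℝ, has T < T₁. -/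
open MeasureTheory Filter Set intervalIntegral

/-- A decaying classical solution of the Ostrovsky–Hunter equation on the line,
on the set `S` of times (typically `[0,T)`): `u` is continuously differentiable
in `t`, twice continuously differentiable in `x`, integrable in `x` for each
time, and with `v(t,x) = ∫_{-∞}^x u(t,y) dy` the nonlocal equation
`u_t + u u_x = γ v` holds pointwise at positive times of `S`. -/
structure IsLineOHSolution (γ : ℝ) (S : Set ℝ) (u : ℝ → ℝ → ℝ) : Prop where
  diff_t : ∀ t ∈ S, ∀ x : ℝ, DifferentiableAt ℝ (fun s => u s x) t
  diff_x : ∀ t ∈ S, ∀ x : ℝ, DifferentiableAt ℝ (u t) x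
  diff_xx : ∀ t ∈ S, ∀ x : ℝ, DifferentiableAt ℝ (deriv (u t)) x
  cont_u : ContinuousOn (fun p : ℝ × ℝ => u p.1 p.2) (S ×ˢ (Set.univ : Set ℝ))
  cont_ut : ContinuousOn (fun p : ℝ × ℝ => deriv (fun s => u s p.2) p.1)
      (S ×ˢ (Set.univ : Set ℝ))
  cont_ux : ContinuousOn (fun p : ℝ × ℝ => deriv (u p.1) p.2) (S ×ˢ (Set.univ : Set ℝ))
  cont_uxx : ContinuousOn (fun p : ℝ × ℝ => deriv (deriv (u p.1)) p.2)
      (S ×ˢ (Set.univ : Set ℝ))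
  integrable : ∀ t ∈ S, MeasureTheory.Integrable (u t)
  eqn : ∀ t ∈ S, 0 < t → ∀ x : ℝ,
    deriv (fun s => u s x) t + u t x * deriv (u t) x = γ * ∫ y in Set.Iic x, u t y


/-- windowed integral of a nonnegative integrable function is at most the total. -/
lemma aux_window_le {f : ℝ → ℝ} (hf : Integrable f) (h0 : ∀ x, 0 ≤ f x) {α β : ℝ} (h : α ≤ β) :
    ∫ x in α..β, f x ≤ ∫ x, f x := by
  rw [intervalIntegral.integral_of_le h]
  exact setIntegral_le_integral hf (Eventually.of_forall h0)

/-- If all symmetric windows are bounded then the total is. -/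
lemma aux_total_le {f : ℝ → ℝ} (hf : Integrable f) {K : ℝ}
    (h : ∀ R : ℝ, 0 ≤ R → ∫ x in (-R)..R, f x ≤ K) : ∫ x, f x ≤ K := by
  have := intervalIntegral_tendsto_integral hf (tendsto_neg_atTop_atBot (G := ℝ)) tendsto_id
  refine le_of_tendsto this ?_
  filter_upwards [eventually_ge_atTop (0:ℝ)] with R hR using h R hR

lemma aux_sobolev {v u : ℝ → ℝ} (hu : Continuous u) (hv : ∀ x, HasDerivAt v (u x) x)
    (iu : Integrable fun x => u x ^ 2) (iv : Integrable fun x => v x ^ 2)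
    (htop : Tendsto v atTop (nhds 0)) (hbot : Tendsto v atBot (nhds 0)) (x : ℝ) :
    2 * v x ^ 2 ≤ (∫ x, u x ^ 2) + ∫ x, v x ^ 2 := by
  have cv : Continuous v := continuous_iff_continuousAt.2 fun x => (hv x).continuousAt
  have iuv : Integrable fun x => u x ^ 2 + v x ^ 2 := iu.add iv
  rw [← integral_add iu iv]
  have key : ∀ R : ℝ, |x| ≤ R → 2 * v x ^ 2 ≤ (∫ x, (u x ^ 2 + v x ^ 2)) + v (-R) ^ 2 + v R ^ 2 := by
    intro R hR
    have h1 : -R ≤ x := (abs_le.1 hR).1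
    have h2 : x ≤ R := (abs_le.1 hR).2
    have hd : ∀ y, HasDerivAt (fun y => v y ^ 2) (2 * v y * u y) y := by
      intro y
      have := (hv y).fun_pow 2
      simpa using this
    have hi : ∀ a b, IntervalIntegrable (fun y => 2 * v y * u y) volume a b := fun a b =>
      (by fun_prop : Continuous fun y => 2 * v y * u y).intervalIntegrable a b
    have hi2 : ∀ a b, IntervalIntegrable (fun y => u y ^ 2 + v y ^ 2) volume a b := fun a b =>
      (by fun_prop : Continuous fun y => u y ^ 2 + v y ^ 2).intervalIntegrable a b
    have e1 := integral_eq_sub_of_hasDerivAt (fun y _ => hd y) (hi (-R) x)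
    have e2 := integral_eq_sub_of_hasDerivAt (fun y _ => hd y) (hi x R)
    have l1 : ∫ y in (-R)..x, 2 * v y * u y ≤ ∫ y in (-R)..x, (u y ^ 2 + v y ^ 2) :=
      integral_mono_on h1 (hi _ _) (hi2 _ _) fun y _ => by nlinarith [sq_nonneg (u y - v y)]
    have l2 : -∫ y in x..R, 2 * v y * u y ≤ ∫ y in x..R, (u y ^ 2 + v y ^ 2) := by
      rw [← intervalIntegral.integral_neg]
      exact integral_mono_on h2 (hi _ _).neg (hi2 _ _) fun y _ => by nlinarith [sq_nonneg (u y + v y)]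
    have l3 := integral_add_adjacent_intervals (hi2 (-R) x) (hi2 x R)
    have l4 := aux_window_le iuv (fun x => by positivity) (h1.trans h2)
    linarith
  have lim : Tendsto (fun R : ℝ => (∫ x, (u x ^ 2 + v x ^ 2)) + v (-R) ^ 2 + v R ^ 2) atTop
      (nhds ((∫ x, (u x ^ 2 + v x ^ 2)) + 0 ^ 2 + 0 ^ 2)) :=
    (tendsto_const_nhds.add ((hbot.comp tendsto_neg_atTop_atBot).pow 2)).add (htop.pow 2)
  have := ge_of_tendsto lim ((eventually_ge_atTop |x|).mono key)
  simpa using this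

/-- semiconvexity estimate -/
lemma aux_semiconvex {v u ux : ℝ → ℝ} {c : ℝ} (hv : ∀ x, HasDerivAt v (u x) x)
    (hu : ∀ x, HasDerivAt u (ux x) x) (hc : ∀ x, c ≤ ux x) (x h : ℝ) (hh : 0 < h) :
    h * u x ≤ v (x + h) - v x + |c| * h ^ 2 ∧ v x - v (x - h) - |c| * h ^ 2 ≤ h * u x := by
  have hmono : ∀ y z, y ≤ z → c * (z - y) ≤ u z - u y := by
    intro y z hyz
    have := (convex_univ (𝕜 := ℝ) (E := ℝ)).mul_sub_le_image_sub_of_le_deriv (f := u) (C := c)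
      (fun y _ => (hu y).continuousAt.continuousWithinAt)
      (fun y _ => (hu y).differentiableAt.differentiableWithinAt)
      (fun y _ => by rw [(hu y).deriv]; exact hc y) y (mem_univ _) z (mem_univ _) hyz
    exact this
  have hcont : Continuous v := continuous_iff_continuousAt.2 fun x => (hv x).continuousAt
  obtain ⟨y, hy, hy'⟩ := exists_hasDerivAt_eq_slope v u (by linarith : x < x + h)
    hcont.continuousOn (fun y _ => hv y)
  obtain ⟨z, hz, hz'⟩ := exists_hasDerivAt_eq_slope v u (by linarith : x - h < x)
    hcont.continuousOn (fun y _ => hv y)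
  have a1 := hmono x y hy.1.le
  have a2 := hmono z x hz.2.le
  have e1 : v (x + h) - v x = h * u y := by rw [hy', add_sub_cancel_left]; field_simp
  have e2 : v x - v (x - h) = h * u z := by rw [hz', sub_sub_cancel]; field_simp
  have b1 : -(|c| * h) ≤ c * (y - x) := by
    have : |c| * (y - x) ≤ |c| * h := by
      apply mul_le_mul_of_nonneg_left _ (abs_nonneg c); linarith [hy.2]
    have := mul_le_mul_of_nonneg_right (neg_abs_le c) (by linarith [hy.1] : 0 ≤ y - x)
    linarith
  have b2 : -(|c| * h) ≤ c * (x - z) := by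
    have : |c| * (x - z) ≤ |c| * h := by
      apply mul_le_mul_of_nonneg_left _ (abs_nonneg c); linarith [hz.1]
    have := mul_le_mul_of_nonneg_right (neg_abs_le c) (by linarith [hz.2] : 0 ≤ x - z)
    linarith
  constructor
  · rw [e1]; nlinarith
  · rw [e2]; nlinarith

lemma aux_u_bound {v u ux : ℝ → ℝ} {c : ℝ} (hv : ∀ x, HasDerivAt v (u x) x)
    (hu : ∀ x, HasDerivAt u (ux x) x) (hc : ∀ x, c ≤ ux x) {B : ℝ} (hB : ∀ x, |v x| ≤ B) (x : ℝ) :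
    |u x| ≤ 2 * B + |c| := by
  obtain ⟨h1, h2⟩ := aux_semiconvex hv hu hc x 1 one_pos
  have := abs_le.1 (hB x); have := abs_le.1 (hB (x+1)); have := abs_le.1 (hB (x-1))
  rw [abs_le]; constructor <;> linarith

lemma aux_u_lim {v u ux : ℝ → ℝ} {c : ℝ} (hv : ∀ x, HasDerivAt v (u x) x)
    (hu : ∀ x, HasDerivAt u (ux x) x) (hc : ∀ x, c ≤ ux x) {l : Filter ℝ}
    (hl : ∀ h : ℝ, Tendsto (fun x => v (x + h)) l (nhds 0)) : Tendsto u l (nhds 0) := by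
  rw [Metric.tendsto_nhds]
  intro e he
  set h : ℝ := e / (2 * (|c| + 1)) with hh
  have hc0 : 0 ≤ |c| := abs_nonneg c
  have hpos : 0 < h := by positivity
  have hce : |c| * h < e / 2 := by
    rw [hh, mul_div_assoc', div_lt_div_iff₀ (by positivity) (by positivity)]; nlinarith
  have t1 := Metric.tendsto_nhds.1 (hl h) (h * e / 4) (by positivity)
  have t2 := Metric.tendsto_nhds.1 (hl 0) (h * e / 4) (by positivity)
  have t3 := Metric.tendsto_nhds.1 (hl (-h)) (h * e / 4) (by positivity)
  filter_upwards [t1, t2, t3] with x h1 h2 h3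
  rw [Real.dist_eq, sub_zero, abs_lt] at *
  rw [add_zero] at h2
  rw [← sub_eq_add_neg] at h3
  obtain ⟨k1, k2⟩ := aux_semiconvex hv hu hc x h hpos
  have : |c| * h ^ 2 < h * e / 2 := by nlinarith
  constructor
  · by_contra hcon; push Not at hcon; nlinarith
  · by_contra hcon; push Not at hcon; nlinarith

/-- derivative under the integral sign, for jointly continuous derivative -/
lemma aux_param_deriv {G Gx : ℝ → ℝ → ℝ} (hG : Continuous fun p : ℝ × ℝ => G p.1 p.2)
    (hGx : Continuous fun p : ℝ × ℝ => Gx p.1 p.2)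
    (hd : ∀ τ x, HasDerivAt (G τ) (Gx τ x) x) (s t x : ℝ) :
    HasDerivAt (fun x => ∫ τ in s..t, G τ x) (∫ τ in s..t, Gx τ x) x := by
  obtain ⟨M, hM⟩ := ((isCompact_uIcc (a := s) (b := t)).prod (isCompact_Icc (a := x - 1) (b := x + 1))).exists_bound_of_continuousOn
    hGx.continuousOn
  refine (intervalIntegral.hasDerivAt_integral_of_dominated_loc_of_deriv_le (F := fun x τ => G τ x)
    (F' := fun x τ => Gx τ x) (s := Ioo (x-1) (x+1)) (bound := fun _ => M) (Ioo_mem_nhds (by linarith) (by linarith)) ?_ ?_ ?_ ?_ ?_ ?_).2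
  · refine Eventually.of_forall fun y => ?_
    exact (hG.comp (by fun_prop : Continuous fun τ : ℝ => (τ, y))).aestronglyMeasurable
  · exact (hG.comp (by fun_prop : Continuous fun τ : ℝ => (τ, x))).intervalIntegrable _ _
  · exact (hGx.comp (by fun_prop : Continuous fun τ : ℝ => (τ, x))).aestronglyMeasurable
  · refine Eventually.of_forall fun τ hτ y hy => ?_
    exact hM (τ, y) ⟨uIoc_subset_uIcc hτ, Ioo_subset_Icc_self hy⟩
  · exact intervalIntegrable_const
  · exact Eventually.of_forall fun τ _ y _ => hd τ y

/-- parametric interval integral is continuous -/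
lemma aux_param_cont {G : ℝ → ℝ → ℝ} (hG : Continuous fun p : ℝ × ℝ => G p.1 p.2) (α β : ℝ) :
    Continuous fun τ => ∫ x in α..β, G τ x :=
  intervalIntegral.continuous_parametric_intervalIntegral_of_continuous' hG α β

/-- time integrated form -/
lemma aux_time_int {W Wt : ℝ → ℝ → ℝ} (hW : Continuous fun p : ℝ × ℝ => W p.1 p.2)
    (hWt : Continuous fun p : ℝ × ℝ => Wt p.1 p.2) {a b : ℝ} (hab : a ≤ b)
    (hd : ∀ τ ∈ Ioo a b, ∀ x, HasDerivAt (fun s => W s x) (Wt τ x) τ) (α β : ℝ) :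
    (∫ x in α..β, W b x) - ∫ x in α..β, W a x = ∫ τ in a..b, ∫ x in α..β, Wt τ x := by
  have h1 : ∀ x, W b x - W a x = ∫ τ in a..b, Wt τ x := by
    intro x
    refine (integral_eq_sub_of_hasDerivAt_of_le hab ?_ (fun τ hτ => hd τ hτ x) ?_).symm
    · exact (hW.comp (by fun_prop : Continuous fun τ : ℝ => (τ, x))).continuousOn
    · exact (hWt.comp (by fun_prop : Continuous fun τ : ℝ => (τ, x))).intervalIntegrable _ _
  have hc : ∀ t, Continuous fun x => W t x := fun t => hW.comp (by fun_prop : Continuous fun x : ℝ => (t, x))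
  rw [← intervalIntegral.integral_sub ((hc b).intervalIntegrable _ _) ((hc a).intervalIntegrable _ _)]
  simp_rw [h1]
  have : Continuous (Function.uncurry fun x τ => Wt τ x) :=
    hWt.comp (by fun_prop : Continuous fun p : ℝ × ℝ => (p.2, p.1))
  refine intervalIntegral_intervalIntegral_swap ?_
  exact (this.continuousOn.integrableOn_compact (isCompact_uIcc.prod isCompact_uIcc)).mono_set
    (prod_mono uIoc_subset_uIcc uIoc_subset_uIcc)


structure OHGood (γ c a b : ℝ) (U V Ux : ℝ → ℝ → ℝ) : Prop where
  cU : Continuous fun p : ℝ × ℝ => U p.1 p.2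
  cV : Continuous fun p : ℝ × ℝ => V p.1 p.2
  cUx : Continuous fun p : ℝ × ℝ => Ux p.1 p.2
  dU : ∀ τ x, HasDerivAt (U τ) (Ux τ x) x
  dV : ∀ τ x, HasDerivAt (V τ) (U τ x) x
  dt : ∀ τ ∈ Ioo a b, ∀ x, HasDerivAt (fun s => U s x) (γ * V τ x - U τ x * Ux τ x) τ
  low : ∀ τ x, c ≤ Ux τ x
  iU : ∀ τ, Integrable fun x => U τ x ^ 2
  iV : ∀ τ, Integrable fun x => V τ x ^ 2
  top : ∀ τ, Tendsto (V τ) atTop (nhds 0)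
  bot : ∀ τ, Tendsto (V τ) atBot (nhds 0)

namespace OHGood
variable {γ c a b : ℝ} {U V Ux : ℝ → ℝ → ℝ}

lemma mono (h : OHGood γ c a b U V Ux) {a' b' : ℝ} (ha : a ≤ a') (hb : b' ≤ b) :
    OHGood γ c a' b' U V Ux :=
  { h with dt := fun τ hτ x => h.dt τ ⟨ha.trans_lt hτ.1, hτ.2.trans_le hb⟩ x }

lemma cUs (h : OHGood γ c a b U V Ux) (τ : ℝ) : Continuous (U τ) :=
  h.cU.comp (by fun_prop : Continuous fun x : ℝ => (τ, x))
lemma cVs (h : OHGood γ c a b U V Ux) (τ : ℝ) : Continuous (V τ) :=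
  h.cV.comp (by fun_prop : Continuous fun x : ℝ => (τ, x))

lemma sob (h : OHGood γ c a b U V Ux) (τ x : ℝ) :
    2 * V τ x ^ 2 ≤ (∫ x, U τ x ^ 2) + ∫ x, V τ x ^ 2 :=
  aux_sobolev (h.cUs τ) (h.dV τ) (h.iU τ) (h.iV τ) (h.top τ) (h.bot τ) x

lemma uTop (h : OHGood γ c a b U V Ux) (τ : ℝ) : Tendsto (U τ) atTop (nhds 0) :=
  aux_u_lim (h.dV τ) (h.dU τ) (h.low τ) fun k => (h.top τ).comp (tendsto_atTop_add_const_right _ k tendsto_id)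
lemma uBot (h : OHGood γ c a b U V Ux) (τ : ℝ) : Tendsto (U τ) atBot (nhds 0) :=
  aux_u_lim (h.dV τ) (h.dU τ) (h.low τ) fun k => (h.bot τ).comp (tendsto_atBot_add_const_right _ k tendsto_id)

lemma uBd (h : OHGood γ c a b U V Ux) {B : ℝ} (hB : ∀ τ x, |V τ x| ≤ B) (τ x : ℝ) :
    |U τ x| ≤ 2 * B + |c| :=
  aux_u_bound (h.dV τ) (h.dU τ) (h.low τ) (hB τ) x

/-- conservation of the L² norm -/
lemma Qcons (h : OHGood γ c a b U V Ux) (hab : a ≤ b) {B : ℝ} (hB : ∀ τ x, |V τ x| ≤ B) :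
    ∫ x, U b x ^ 2 = ∫ x, U a x ^ 2 := by
  have cU := h.cU
  have cV := h.cV
  have cUx := h.cUx
  set F : ℝ → ℝ → ℝ := fun τ x => γ * V τ x ^ 2 - 2 / 3 * U τ x ^ 3 with hF
  have key : ∀ R : ℝ, (∫ x in (-R)..R, U b x ^ 2) - ∫ x in (-R)..R, U a x ^ 2
      = ∫ τ in a..b, (F τ R - F τ (-R)) := by
    intro R
    rw [aux_time_int (W := fun τ x => U τ x ^ 2)
      (Wt := fun τ x => 2 * U τ x * (γ * V τ x - U τ x * Ux τ x)) (by fun_prop) (by fun_prop) hab]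
    · refine intervalIntegral.integral_congr fun τ _ => ?_
      refine integral_eq_sub_of_hasDerivAt (fun x _ => ?_) ?_
      · have h1 := (((h.dV τ x).fun_pow 2).const_mul γ).sub (((h.dU τ x).fun_pow 3).const_mul (2/3))
        refine h1.congr_deriv ?_
        push_cast; ring
      · apply Continuous.intervalIntegrable
        exact (by fun_prop : Continuous fun p : ℝ × ℝ => 2 * U p.1 p.2 * (γ * V p.1 p.2 - U p.1 p.2 * Ux p.1 p.2)).comp (by fun_prop : Continuous fun x : ℝ => (τ, x))
    · intro τ hτ x
      have := (h.dt τ hτ x).fun_pow 2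
      simpa using this
  have lim0 : Tendsto (fun R : ℝ => ∫ τ in a..b, (F τ R - F τ (-R))) atTop (nhds (∫ τ in a..b, (0:ℝ))) := by
    set D := 2 * B + |c| with hD
    have hB0 : 0 ≤ B := (abs_nonneg _).trans (hB 0 0)
    have hFb : ∀ τ x, |F τ x| ≤ |γ| * B ^ 2 + 2 / 3 * D ^ 3 := by
      intro τ x
      refine (abs_sub _ _).trans (add_le_add ?_ ?_)
      · rw [abs_mul, abs_pow]
        have := hB τ x
        gcongr
      · rw [abs_mul, abs_pow, abs_of_pos (by norm_num : (0:ℝ) < 2/3)]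
        have := h.uBd hB τ x
        gcongr
    refine intervalIntegral.tendsto_integral_filter_of_dominated_convergence
      (fun _ => 2 * (|γ| * B ^ 2 + 2 / 3 * D ^ 3)) ?_ ?_ intervalIntegrable_const ?_
    · refine Eventually.of_forall fun R => Continuous.aestronglyMeasurable ?_
      have cF : Continuous fun p : ℝ × ℝ => F p.1 p.2 := by fun_prop
      exact (cF.comp (by fun_prop : Continuous fun τ : ℝ => (τ, R))).sub
        (cF.comp (by fun_prop : Continuous fun τ : ℝ => (τ, -R)))
    · refine Eventually.of_forall fun R => Eventually.of_forall fun τ _ => ?_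
      refine (abs_sub _ _).trans ?_
      linarith [hFb τ R, hFb τ (-R)]
    · refine Eventually.of_forall fun τ _ => ?_
      have t1 : ∀ l : Filter ℝ, Tendsto (V τ) l (nhds 0) → Tendsto (U τ) l (nhds 0) → Tendsto (F τ) l (nhds 0) := by
        intro l h1 h2
        have := ((h1.pow 2).const_mul γ).sub ((h2.pow 3).const_mul (2/3))
        simpa using this
      have := (t1 _ (h.top τ) (h.uTop τ)).sub ((t1 _ (h.bot τ) (h.uBot τ)).comp tendsto_neg_atTop_atBot)
      simpa using this
  have l1 := intervalIntegral_tendsto_integral (h.iU b) (tendsto_neg_atTop_atBot (G := ℝ)) tendsto_id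
  have l2 := intervalIntegral_tendsto_integral (h.iU a) (tendsto_neg_atTop_atBot (G := ℝ)) tendsto_id
  have l3 := l1.sub l2
  simp only [id] at l3
  have := tendsto_nhds_unique (l3.congr key) lim0
  simp at this
  linarith

end OHGood

/-- exponentially weighted one-sided convolution -/
noncomputable def expConv (δ : ℝ) (f : ℝ → ℝ) (x : ℝ) : ℝ :=
  ∫ σ in Ioi (0:ℝ), Real.exp (-δ * σ) * f (x - σ)

lemma expConv_dom {δ : ℝ} (hδ : 0 < δ) (B : ℝ) :
    Integrable (fun σ => Real.exp (-δ * σ) * B) (volume.restrict (Ioi 0)) :=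
  (integrableOn_exp_mul_Ioi (by linarith : -δ < 0) 0).mul_const B

lemma expConv_bound {δ : ℝ} (hδ : 0 < δ) {f : ℝ → ℝ} {B : ℝ} (hB : ∀ x, |f x| ≤ B) (x : ℝ) :
    |expConv δ f x| ≤ B / δ := by
  have : ∫ σ in Ioi (0:ℝ), Real.exp (-δ * σ) * B = B / δ := by
    rw [MeasureTheory.integral_mul_const, integral_exp_mul_Ioi (by linarith : -δ < 0)]
    simp; field_simp
  rw [← this, expConv, ← Real.norm_eq_abs]
  refine norm_integral_le_of_norm_le (expConv_dom hδ B) (Eventually.of_forall fun σ => ?_)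
  rw [norm_mul, Real.norm_eq_abs, Real.abs_exp]
  exact mul_le_mul_of_nonneg_left (hB _) (Real.exp_pos _).le

lemma expConv_nonneg {δ : ℝ} {f : ℝ → ℝ} (h : ∀ x, 0 ≤ f x) (x : ℝ) : 0 ≤ expConv δ f x :=
  integral_nonneg fun _ => mul_nonneg (Real.exp_pos _).le (h _)

lemma expConv_tendsto {δ : ℝ} (hδ : 0 < δ) {f : ℝ → ℝ} {B : ℝ} (hf : Continuous f) (hB : ∀ x, |f x| ≤ B)
    {l : Filter ℝ} [l.IsCountablyGenerated] (hl : ∀ σ : ℝ, Tendsto (fun x => f (x - σ)) l (nhds 0)) :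
    Tendsto (expConv δ f) l (nhds 0) := by
  have : Tendsto (expConv δ f) l (nhds (∫ σ in Ioi (0:ℝ), (0:ℝ))) := by
    refine tendsto_integral_filter_of_dominated_convergence (fun σ => Real.exp (-δ * σ) * B) ?_ ?_ (expConv_dom hδ B) ?_
    · exact Eventually.of_forall fun x => (by fun_prop : Continuous fun σ => Real.exp (-δ * σ) * f (x - σ)).aestronglyMeasurable
    · refine Eventually.of_forall fun x => Eventually.of_forall fun σ => ?_
      rw [norm_mul, Real.norm_eq_abs, Real.abs_exp]
      exact mul_le_mul_of_nonneg_left (hB _) (Real.exp_pos _).le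
    · refine Eventually.of_forall fun σ => ?_
      simpa using (hl σ).const_mul (Real.exp (-δ * σ))
  simpa using this

lemma expConv_cont {δ : ℝ} (hδ : 0 < δ) {f : ℝ → ℝ → ℝ} {B : ℝ}
    (hf : Continuous fun p : ℝ × ℝ => f p.1 p.2) (hB : ∀ τ x, |f τ x| ≤ B) :
    Continuous fun p : ℝ × ℝ => expConv δ (f p.1) p.2 := by
  refine continuous_of_dominated (bound := fun σ => Real.exp (-δ * σ) * B) ?_ ?_ (expConv_dom hδ B) ?_
  · intro p
    have : Continuous fun σ : ℝ => f p.1 (p.2 - σ) := hf.comp (by fun_prop : Continuous fun σ : ℝ => (p.1, p.2 - σ))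
    exact (by fun_prop : Continuous fun σ : ℝ => Real.exp (-δ * σ) * f p.1 (p.2 - σ)).aestronglyMeasurable
  · refine fun p => Eventually.of_forall fun σ => ?_
    rw [norm_mul, Real.norm_eq_abs, Real.abs_exp]
    exact mul_le_mul_of_nonneg_left (hB _ _) (Real.exp_pos _).le
  · refine Eventually.of_forall fun σ => ?_
    have : Continuous fun p : ℝ × ℝ => f p.1 (p.2 - σ) := hf.comp (by fun_prop : Continuous fun p : ℝ × ℝ => (p.1, p.2 - σ))
    fun_prop

lemma expConv_hasDerivAt {δ : ℝ} (hδ : 0 < δ) {f : ℝ → ℝ} {B : ℝ} (hf : Continuous f) (hB : ∀ x, |f x| ≤ B) (x : ℝ) :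
    HasDerivAt (expConv δ f) (f x - δ * expConv δ f x) x := by
  have hExpInt : ∀ x, IntegrableOn (fun y => Real.exp (δ * y) * f y) (Iic x) := by
    intro x
    refine Integrable.mono' ((integrableOn_exp_mul_Iic hδ x).mul_const B) ?_ (Eventually.of_forall fun σ => ?_)
    · exact (by fun_prop : Continuous fun y => Real.exp (δ * y) * f y).aestronglyMeasurable
    · rw [norm_mul, Real.norm_eq_abs, Real.abs_exp]
      exact mul_le_mul_of_nonneg_left (hB _) (Real.exp_pos _).le
  have e1 : ∀ x, expConv δ f x = Real.exp (-δ * x) * ((∫ y in Iic 0, Real.exp (δ * y) * f y) + ∫ y in (0:ℝ)..x, Real.exp (δ * y) * f y) := by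
    intro x
    rw [intervalIntegral.integral_Iic_sub_Iic (hExpInt 0) (hExpInt x) |>.symm, add_sub_cancel, ← MeasureTheory.integral_const_mul, expConv]
    have := integral_comp_neg_Iic (c := 0) (f := fun σ => Real.exp (-δ * σ) * f (x - σ))
    rw [neg_zero] at this
    rw [← this]
    have h3 := (measurePreserving_add_right volume x).setIntegral_preimage_emb (measurableEmbedding_addRight x)
      (fun y => Real.exp (-δ * x) * (Real.exp (δ * y) * f y)) (Iic x)
    rw [← h3]
    have : (fun y => y + x) ⁻¹' Iic x = Iic 0 := by ext; simp
    rw [this]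
    refine integral_congr_ae (Eventually.of_forall fun y => ?_)
    simp only []
    rw [← mul_assoc, ← Real.exp_add]
    congr 2 <;> ring_nf
  have e2 : expConv δ f = fun x => Real.exp (-δ * x) * ((∫ y in Iic 0, Real.exp (δ * y) * f y) + ∫ y in (0:ℝ)..x, Real.exp (δ * y) * f y) := funext e1
  have d1 : HasDerivAt (fun x => Real.exp (-δ * x)) (Real.exp (-δ * x) * (-δ * 1)) x :=
    ((hasDerivAt_id x).const_mul (-δ)).exp
  have cI : Continuous fun y => Real.exp (δ * y) * f y := by fun_prop
  have d2 := (integral_hasDerivAt_right (cI.intervalIntegrable 0 x) (cI.stronglyMeasurableAtFilter _ _) cI.continuousAt).const_add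
    (∫ y in Iic 0, Real.exp (δ * y) * f y)
  have := d1.mul d2
  rw [e2]
  refine this.congr_deriv ?_
  have : Real.exp (-δ * x) * Real.exp (δ * x) = 1 := by rw [← Real.exp_add]; simp
  linear_combination f x * this


section slice
variable {v u : ℝ → ℝ} {δ B n Q0 D : ℝ}

lemma slice_id (hδ : 0 < δ) (cv : Continuous v) (hB : ∀ x, |v x| ≤ B) (α β : ℝ) :
    ∫ x in α..β, v x ^ 2 = (∫ x in α..β, (v x - δ * expConv δ v x) ^ 2)
      + δ ^ 2 * (∫ x in α..β, expConv δ v x ^ 2) + δ * (expConv δ v β ^ 2 - expConv δ v α ^ 2) := by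
  have hq := expConv_hasDerivAt hδ cv hB
  set q := expConv δ v with hqdef
  have cq : Continuous q := continuous_iff_continuousAt.2 fun x => (hq x).continuousAt
  have hd : ∀ x, HasDerivAt (fun x => q x ^ 2) (2 * q x * (v x - δ * q x)) x := by
    intro x
    have := (hq x).fun_pow 2
    simpa using this
  have e := integral_eq_sub_of_hasDerivAt (a := α) (b := β) (fun x _ => hd x)
    ((by fun_prop : Continuous fun x => 2 * q x * (v x - δ * q x)).intervalIntegrable _ _)
  rw [← e, ← intervalIntegral.integral_const_mul, ← intervalIntegral.integral_const_mul,
    ← intervalIntegral.integral_add, ← intervalIntegral.integral_add]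
  · refine intervalIntegral.integral_congr fun x _ => ?_
    ring
  all_goals exact Continuous.intervalIntegrable (by fun_prop) _ _

lemma slice_q (hδ : 0 < δ) (cv : Continuous v) (hB : ∀ x, |v x| ≤ B) (iv : Integrable fun x => v x ^ 2)
    (hn : ∫ x, v x ^ 2 ≤ n) (hbot : Tendsto v atBot (nhds 0)) (x : ℝ) :
    δ * expConv δ v x ^ 2 ≤ n := by
  have hl : Tendsto (expConv δ v) atBot (nhds 0) :=
    expConv_tendsto hδ cv hB fun σ => hbot.comp (tendsto_atBot_add_const_right _ (-σ) tendsto_id)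
  have h1 : Tendsto (fun α => n + δ * expConv δ v α ^ 2) atBot (nhds (n + δ * 0 ^ 2)) :=
    tendsto_const_nhds.add ((hl.pow 2).const_mul δ)
  have : δ * expConv δ v x ^ 2 ≤ n + δ * 0 ^ 2 := by
    refine ge_of_tendsto h1 ?_
    filter_upwards [eventually_le_atBot x] with α hα
    have e := slice_id hδ cv hB α x
    have w := aux_window_le iv (fun x => by positivity) hα
    have p1 : 0 ≤ ∫ x in α..x, (v x - δ * expConv δ v x) ^ 2 :=
      intervalIntegral.integral_nonneg hα fun x _ => by positivity
    have p2 : 0 ≤ ∫ x in α..x, (expConv δ v x) ^ 2 :=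
      intervalIntegral.integral_nonneg hα fun x _ => by positivity
    have p3 : 0 ≤ δ ^ 2 * ∫ x in α..x, (expConv δ v x) ^ 2 := by positivity
    linarith
  simpa using this

lemma slice_dq (hδ : 0 < δ) (cv : Continuous v) (hB : ∀ x, |v x| ≤ B) (iv : Integrable fun x => v x ^ 2)
    (hn : ∫ x, v x ^ 2 ≤ n) (hbot : Tendsto v atBot (nhds 0)) (x : ℝ) :
    |δ * expConv δ v x| ≤ √δ * √n := by
  have := slice_q hδ cv hB iv hn hbot x
  rw [← Real.sqrt_mul hδ.le]
  apply Real.abs_le_sqrt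
  nlinarith

lemma slice_r2 (hδ : 0 < δ) (cv : Continuous v) (hB : ∀ x, |v x| ≤ B) (iv : Integrable fun x => v x ^ 2)
    {α β : ℝ} (h : α ≤ β) :
    ∫ x in α..β, (v x - δ * expConv δ v x) ^ 2 ≤ (∫ x, v x ^ 2) + δ * expConv δ v α ^ 2 := by
  have e := slice_id hδ cv hB α β
  have w := aux_window_le iv (fun x => by positivity) h
  have p2 : 0 ≤ ∫ x in α..β, (expConv δ v x) ^ 2 :=
    intervalIntegral.integral_nonneg h fun x _ => by positivity
  have p3 : 0 ≤ δ ^ 2 * ∫ x in α..β, (expConv δ v x) ^ 2 := by positivity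
  have p4 : 0 ≤ δ * expConv δ v β ^ 2 := by positivity
  linarith

lemma slice_p (hδ : 0 < δ) (cu : Continuous u) (hD : ∀ x, |u x ^ 2 / 2| ≤ D)
    (iu : Integrable fun x => u x ^ 2) (hQ : ∫ x, u x ^ 2 ≤ Q0) (hbot : Tendsto u atBot (nhds 0)) (x : ℝ) :
    expConv δ (fun y => u y ^ 2 / 2) x ≤ Q0 / 2 := by
  have cf : Continuous fun y => u y ^ 2 / 2 := by fun_prop
  have hp := expConv_hasDerivAt hδ cf hD
  have hp0 := expConv_nonneg (δ := δ) (f := fun y => u y ^ 2 / 2) fun x => by positivity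
  have hf0 : Tendsto (fun y => u y ^ 2 / 2) atBot (nhds 0) := by
    have := (hbot.pow 2).div_const 2
    simpa using this
  have hl : Tendsto (expConv δ (fun y => u y ^ 2 / 2)) atBot (nhds 0) :=
    expConv_tendsto hδ cf hD fun σ => hf0.comp (tendsto_atBot_add_const_right _ (-σ) tendsto_id)
  set p := expConv δ (fun y => u y ^ 2 / 2) with hpdef
  have cp : Continuous p := continuous_iff_continuousAt.2 fun x => (hp x).continuousAt
  have h1 : Tendsto (fun α => Q0 / 2 + p α) atBot (nhds (Q0 / 2 + 0)) := tendsto_const_nhds.add hl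
  have : p x ≤ Q0 / 2 + 0 := by
    refine ge_of_tendsto h1 ?_
    filter_upwards [eventually_le_atBot x] with α hα
    have e := integral_eq_sub_of_hasDerivAt (a := α) (b := x) (fun x _ => hp x)
      ((by fun_prop : Continuous fun x => u x ^ 2 / 2 - δ * p x).intervalIntegrable _ _)
    have m : ∫ x in α..x, (u x ^ 2 / 2 - δ * p x) ≤ ∫ x in α..x, u x ^ 2 / 2 :=
      integral_mono_on hα ((by fun_prop : Continuous fun x => u x ^ 2 / 2 - δ * p x).intervalIntegrable _ _)
        (cf.intervalIntegrable _ _) fun y _ => by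
          have := mul_nonneg hδ.le (hp0 y); linarith
    rw [intervalIntegral.integral_div] at m
    have w := aux_window_le iu (fun x => by positivity) hα
    linarith
  simpa using this

lemma slice_pint (hδ : 0 < δ) (cu : Continuous u) (hD : ∀ x, |u x ^ 2 / 2| ≤ D)
    (iu : Integrable fun x => u x ^ 2) (hQ : ∫ x, u x ^ 2 ≤ Q0) (hbot : Tendsto u atBot (nhds 0))
    {α β : ℝ} (h : α ≤ β) :
    δ * ∫ x in α..β, expConv δ (fun y => u y ^ 2 / 2) x ≤ Q0 := by
  have cf : Continuous fun y => u y ^ 2 / 2 := by fun_prop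
  have hp := expConv_hasDerivAt hδ cf hD
  have hp0 := expConv_nonneg (δ := δ) (f := fun y => u y ^ 2 / 2) fun x => by positivity
  have hp1 := slice_p hδ cu hD iu hQ hbot
  set p := expConv δ (fun y => u y ^ 2 / 2) with hpdef
  have cp : Continuous p := continuous_iff_continuousAt.2 fun x => (hp x).continuousAt
  have e := integral_eq_sub_of_hasDerivAt (a := α) (b := β) (fun x _ => hp x)
      ((by fun_prop : Continuous fun x => u x ^ 2 / 2 - δ * p x).intervalIntegrable _ _)
  rw [intervalIntegral.integral_sub (cf.intervalIntegrable _ _) ((cp.const_mul δ).intervalIntegrable _ _),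
    intervalIntegral.integral_const_mul, intervalIntegral.integral_div] at e
  have w := aux_window_le iu (fun x => by positivity) h
  linarith [hp0 β, hp1 α]

lemma slice_main (hδ : 0 < δ) (cv : Continuous v) (hB : ∀ x, |v x| ≤ B) (iv : Integrable fun x => v x ^ 2)
    (hn : ∫ x, v x ^ 2 ≤ n) (hvbot : Tendsto v atBot (nhds 0)) (cu : Continuous u) (hD : ∀ x, |u x ^ 2 / 2| ≤ D)
    (iu : Integrable fun x => u x ^ 2) (hQ : ∫ x, u x ^ 2 ≤ Q0) (hubot : Tendsto u atBot (nhds 0))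
    {α β : ℝ} (h : α ≤ β) :
    |∫ x in α..β, (v x - δ * expConv δ v x) * (-u x ^ 2 + 2 * δ * expConv δ (fun y => u y ^ 2 / 2) x)|
      ≤ B * Q0 + √δ * (√n * Q0 + 2 * n + Q0 ^ 2) := by
  have cf : Continuous fun y => u y ^ 2 / 2 := by fun_prop
  have hp := expConv_hasDerivAt hδ cf hD
  have hp0 := expConv_nonneg (δ := δ) (f := fun y => u y ^ 2 / 2) fun x => by positivity
  have hp1 := slice_p hδ cu hD iu hQ hubot
  have hp2 := slice_pint hδ cu hD iu hQ hubot h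
  have hq := expConv_hasDerivAt hδ cv hB
  have hdq := slice_dq hδ cv hB iv hn hvbot
  have hr2 := slice_r2 hδ cv hB iv h
  have hqn := slice_q hδ cv hB iv hn hvbot α
  set p := expConv δ (fun y => u y ^ 2 / 2) with hpdef
  set q := expConv δ v with hqdef
  have cp : Continuous p := continuous_iff_continuousAt.2 fun x => (hp x).continuousAt
  have cq : Continuous q := continuous_iff_continuousAt.2 fun x => (hq x).continuousAt
  have hs : 0 < √δ := Real.sqrt_pos.2 hδ
  have hss : √δ * √δ = δ := Real.mul_self_sqrt hδ.le
  have hQ0 : 0 ≤ Q0 := (integral_nonneg fun x => by positivity).trans hQ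
  have hB0 : 0 ≤ B := (abs_nonneg _).trans (hB 0)
  have pw : ∀ x, ‖(v x - δ * q x) * (-u x ^ 2 + 2 * δ * p x)‖ ≤
      (B + √δ * √n) * u x ^ 2 + √δ * (v x - δ * q x) ^ 2 + √δ * (Q0 / 2) * (δ * p x) := by
    intro x
    have hr : |v x - δ * q x| ≤ B + √δ * √n := (abs_sub _ _).trans (add_le_add (hB x) (hdq x))
    set r := v x - δ * q x with hrdef
    rw [Real.norm_eq_abs, abs_mul]
    have h2 : |(-u x ^ 2 + 2 * δ * p x)| ≤ u x ^ 2 + 2 * δ * p x := by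
      have : 0 ≤ 2 * δ * p x := by have := hp0 x; positivity
      rw [abs_le]; constructor <;> nlinarith [sq_nonneg (u x)]
    have h3 : |r| * (2 * δ * p x) ≤ √δ * r ^ 2 + √δ * (Q0 / 2) * (δ * p x) := by
      have h4 : √δ * (δ * p x) * p x ≤ √δ * (δ * p x) * (Q0 / 2) := by
        have := hp0 x
        exact mul_le_mul_of_nonneg_left (hp1 x) (by positivity)
      have h5 : 0 ≤ √δ * (|r| - √δ * p x) ^ 2 := by positivity
      have h6 : √δ * (|r| - √δ * p x) ^ 2 = √δ * r ^ 2 - |r| * (2 * δ * p x) + √δ * (δ * p x) * p x := by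
        rw [← sq_abs r, ← hss]
        simp only [Real.sqrt_mul_self hs.le]
        ring
      linarith
    calc |r| * |(-u x ^ 2 + 2 * δ * p x)| ≤ |r| * (u x ^ 2 + 2 * δ * p x) := by gcongr
      _ = |r| * u x ^ 2 + |r| * (2 * δ * p x) := by ring
      _ ≤ (B + √δ * √n) * u x ^ 2 + (√δ * r ^ 2 + √δ * (Q0 / 2) * (δ * p x)) := by
        gcongr
      _ = _ := by ring
  have h7 := intervalIntegral.norm_integral_le_of_norm_le (μ := volume) h (Eventually.of_forall fun x _ => pw x)
    ((by fun_prop : Continuous fun x => (B + √δ * √n) * u x ^ 2 + √δ * (v x - δ * q x) ^ 2 + √δ * (Q0 / 2) * (δ * p x)).intervalIntegrable _ _)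
  rw [Real.norm_eq_abs] at h7
  refine h7.trans ?_
  rw [intervalIntegral.integral_add, intervalIntegral.integral_add, intervalIntegral.integral_const_mul,
    intervalIntegral.integral_const_mul, intervalIntegral.integral_const_mul, intervalIntegral.integral_const_mul]
  rotate_left
  iterate 4 exact Continuous.intervalIntegrable (by fun_prop) _ _
  have w := aux_window_le iu (fun x => by positivity) h
  have a1 : (B + √δ * √n) * ∫ x in α..β, u x ^ 2 ≤ (B + √δ * √n) * Q0 :=
    mul_le_mul_of_nonneg_left (w.trans hQ) (by positivity)
  have a2 : √δ * ∫ x in α..β, (v x - δ * q x) ^ 2 ≤ √δ * (2 * n) :=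
    mul_le_mul_of_nonneg_left (by linarith) hs.le
  have a3 : √δ * (Q0 / 2) * (δ * ∫ x in α..β, p x) ≤ √δ * (Q0 / 2) * Q0 :=
    mul_le_mul_of_nonneg_left hp2 (by positivity)
  have a4 : 0 ≤ √δ * Q0 ^ 2 := by positivity
  nlinarith
end slice

namespace OHGood
variable {γ c a b : ℝ} {U V Ux : ℝ → ℝ → ℝ}

/-- time derivative of the regularised antiderivative -/
lemma r_time (h : OHGood γ c a b U V Ux) {B : ℝ} (hB : ∀ τ x, |V τ x| ≤ B) {δ : ℝ} (hδ : 0 < δ)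
    (τ : ℝ) (hτ : τ ∈ Ioo a b) (x : ℝ) :
    HasDerivAt (fun s => V s x - δ * expConv δ (V s) x)
      (γ * expConv δ (V τ) x - U τ x ^ 2 / 2 + δ * expConv δ (fun y => U τ y ^ 2 / 2) x) τ := by
  have cU := h.cU
  have cV := h.cV
  have cUx := h.cUx
  have hB0 : 0 ≤ B := (abs_nonneg _).trans (hB 0 0)
  set D := (2 * B + |c|) ^ 2 / 2 with hDdef
  have hD : ∀ τ x, |U τ x ^ 2 / 2| ≤ D := by
    intro τ x
    rw [abs_of_nonneg (by positivity), hDdef, ← sq_abs (U τ x)]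
    have := h.uBd hB τ x
    gcongr
  have cf : Continuous fun p : ℝ × ℝ => U p.1 p.2 ^ 2 / 2 := by fun_prop
  have hp : ∀ τ x, HasDerivAt (expConv δ fun y => U τ y ^ 2 / 2) (U τ x ^ 2 / 2 - δ * expConv δ (fun y => U τ y ^ 2 / 2) x) x :=
    fun τ => expConv_hasDerivAt hδ (cf.comp (by fun_prop : Continuous fun x : ℝ => (τ, x))) (hD τ)
  have hq : ∀ τ x, HasDerivAt (expConv δ (V τ)) (V τ x - δ * expConv δ (V τ) x) x :=
    fun τ => expConv_hasDerivAt hδ (h.cVs τ) (hB τ)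
  have bp : ∀ τ x, |expConv δ (fun y => U τ y ^ 2 / 2) x| ≤ D / δ := fun τ x => expConv_bound hδ (hD τ) x
  have bq : ∀ τ x, |expConv δ (V τ) x| ≤ B / δ := fun τ x => expConv_bound hδ (hB τ) x
  have cp : Continuous fun z : ℝ × ℝ => expConv δ (fun y => U z.1 y ^ 2 / 2) z.2 :=
    expConv_cont hδ (f := fun τ y => U τ y ^ 2 / 2) cf hD
  have cq : Continuous fun z : ℝ × ℝ => expConv δ (V z.1) z.2 := expConv_cont hδ cV hB
  obtain ⟨p, hpe⟩ : ∃ p : ℝ → ℝ → ℝ, p = fun τ => expConv δ (fun y => U τ y ^ 2 / 2) := ⟨_, rfl⟩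
  obtain ⟨q, hqe⟩ : ∃ q : ℝ → ℝ → ℝ, q = fun τ => expConv δ (V τ) := ⟨_, rfl⟩
  have hp' : ∀ τ, expConv δ (fun y => U τ y ^ 2 / 2) = p τ := fun τ => by rw [hpe]
  have hq' : ∀ τ, expConv δ (V τ) = q τ := fun τ => by rw [hqe]
  simp only [hp', hq'] at hp hq bp bq cp cq ⊢
  set G : ℝ → ℝ → ℝ := fun τ x => γ * q τ x - U τ x ^ 2 / 2 + δ * p τ x with hG
  have cG : Continuous fun z : ℝ × ℝ => G z.1 z.2 := by fun_prop
  set Gx : ℝ → ℝ → ℝ := fun τ x => (γ * V τ x - U τ x * Ux τ x) - δ * G τ x with hGx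
  have cGx : Continuous fun z : ℝ × ℝ => Gx z.1 z.2 := by fun_prop
  have dG : ∀ τ x, HasDerivAt (G τ) (Gx τ x) x := by
    intro τ x
    have := (((hq τ x).const_mul γ).sub (((h.dU τ x).fun_pow 2).div_const 2)).add ((hp τ x).const_mul δ)
    refine this.congr_deriv ?_
    simp only [hGx, hG]; push_cast; ring
  have bG : ∀ τ x, |G τ x| ≤ |γ| * (B / δ) + D + δ * (D / δ) := by
    intro τ x
    refine (abs_add_le _ _).trans (add_le_add ((abs_sub _ _).trans (add_le_add ?_ (hD τ x))) ?_)
    · rw [abs_mul]; exact mul_le_mul_of_nonneg_left (bq τ x) (abs_nonneg _)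
    · rw [abs_mul, abs_of_pos hδ]; exact mul_le_mul_of_nonneg_left (bp τ x) hδ.le
  set r : ℝ → ℝ → ℝ := fun τ x => V τ x - δ * q τ x with hr
  have br : ∀ τ x, |r τ x| ≤ B + δ * (B / δ) := by
    intro τ x
    refine (abs_sub _ _).trans (add_le_add (hB τ x) ?_)
    rw [abs_mul, abs_of_pos hδ]; exact mul_le_mul_of_nonneg_left (bq τ x) hδ.le
  have dr : ∀ τ x, HasDerivAt (r τ) (U τ x - δ * r τ x) x := by
    intro τ x
    exact (h.dV τ x).sub ((hq τ x).const_mul δ)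
  have key : ∀ t ∈ Icc a b, ∀ x, r t x = r a x + ∫ τ in a..t, G τ x := by
    intro t ht
    set M := (B + δ * (B / δ)) + (B + δ * (B / δ)) + (|γ| * (B / δ) + D + δ * (D / δ)) * |t - a| with hM
    set E : ℝ → ℝ := fun x => r t x - r a x - ∫ τ in a..t, G τ x with hE
    have bE : ∀ x, |E x| ≤ M := by
      intro x
      refine (abs_sub _ _).trans (add_le_add ((abs_sub _ _).trans (add_le_add (br _ _) (br _ _))) ?_)
      exact intervalIntegral.norm_integral_le_of_norm_le_const (f := fun τ => G τ x) (fun τ _ => bG τ x)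
    have dE : ∀ x, HasDerivAt E (-δ * E x) x := by
      intro x
      have h1 := ((dr t x).sub (dr a x)).sub (aux_param_deriv cG cGx dG a t x)
      refine h1.congr_deriv ?_
      have cs : ∀ W : ℝ → ℝ → ℝ, (Continuous fun z : ℝ × ℝ => W z.1 z.2) → IntervalIntegrable (fun τ => W τ x) volume a t :=
        fun W hW => (hW.comp (by fun_prop : Continuous fun τ : ℝ => (τ, x))).intervalIntegrable _ _
      have e1 : ∫ τ in a..t, Gx τ x = (U t x - U a x) - δ * ∫ τ in a..t, G τ x := by
        simp only [hGx]
        rw [intervalIntegral.integral_sub (cs (fun τ x => γ * V τ x - U τ x * Ux τ x) (by fun_prop)) (cs (fun τ x => δ * G τ x) (by fun_prop)),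
          intervalIntegral.integral_const_mul]
        rw [integral_eq_sub_of_hasDerivAt_of_le ht.1 (f := fun s => U s x) _ (fun s hs => h.dt s ⟨hs.1, hs.2.trans_le ht.2⟩ x)
          (cs (fun τ x => γ * V τ x - U τ x * Ux τ x) (by fun_prop))]
        exact (cU.comp (by fun_prop : Continuous fun τ : ℝ => (τ, x))).continuousOn
      rw [e1]
      simp only [hE]; ring
    have dc : ∀ x, HasDerivAt (fun x => Real.exp (δ * x) * E x) 0 x := by
      intro x
      have d1 : HasDerivAt (fun x => Real.exp (δ * x)) (Real.exp (δ * x) * (δ * 1)) x :=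
        ((hasDerivAt_id x).const_mul δ).exp
      refine (d1.mul (dE x)).congr_deriv ?_
      ring
    have hconst : ∀ x y, Real.exp (δ * x) * E x = Real.exp (δ * y) * E y :=
      is_const_of_deriv_eq_zero (fun x => (dc x).differentiableAt) fun x => (dc x).deriv
    have hE0 : ∀ x, E x = 0 := by
      intro x
      have l1 : Tendsto (fun y => Real.exp (δ * y) * M) atBot (nhds (0 * M)) :=
        (Real.tendsto_exp_atBot.comp (tendsto_id.const_mul_atBot hδ)).mul_const M
      have : |Real.exp (δ * x) * E x| ≤ 0 * M := by
        refine ge_of_tendsto' l1 fun y => ?_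
        rw [hconst x y, abs_mul, Real.abs_exp]
        exact mul_le_mul_of_nonneg_left (bE y) (Real.exp_pos _).le
      rw [zero_mul] at this
      have := abs_nonpos_iff.1 this
      exact (mul_eq_zero.1 this).resolve_left (Real.exp_pos _).ne'
    intro x
    have := hE0 x
    simp only [hE] at this
    linarith
  have cGs : Continuous fun τ => G τ x := cG.comp (by fun_prop : Continuous fun τ : ℝ => (τ, x))
  have d := (integral_hasDerivAt_right (cGs.intervalIntegrable a τ) (cGs.stronglyMeasurableAtFilter _ _) cGs.continuousAt).const_add (r a x)
  refine d.congr_of_eventuallyEq ?_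
  filter_upwards [Ioo_mem_nhds hτ.1 hτ.2] with t ht
  exact key t (Ioo_subset_Icc_self ht) x

lemma Y_window (h : OHGood γ c a b U V Ux) (hab : a ≤ b) {B n Q0 : ℝ} (hB : ∀ τ x, |V τ x| ≤ B)
    (hQ : ∀ τ, ∫ x, U τ x ^ 2 ≤ Q0) (hn : ∀ τ, ∫ x, V τ x ^ 2 ≤ n) {δ : ℝ} (hδ : 0 < δ) {R : ℝ} (hR : 0 ≤ R) :
    |(∫ x in (-R)..R, (V b x - δ * expConv δ (V b) x) ^ 2) - ∫ x in (-R)..R, (V a x - δ * expConv δ (V a) x) ^ 2|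
      ≤ |γ| * (∫ τ in a..b, (expConv δ (V τ) R ^ 2 + expConv δ (V τ) (-R) ^ 2))
        + (b - a) * (B * Q0 + √δ * (√n * Q0 + 2 * n + Q0 ^ 2)) := by
  have cU := h.cU
  have cV := h.cV
  have hB0 : 0 ≤ B := (abs_nonneg _).trans (hB 0 0)
  have hD : ∀ τ x, |U τ x ^ 2 / 2| ≤ (2 * B + |c|) ^ 2 / 2 := by
    intro τ x
    rw [abs_of_nonneg (by positivity), ← sq_abs (U τ x)]
    have := h.uBd hB τ x
    gcongr
  have cf : Continuous fun p : ℝ × ℝ => U p.1 p.2 ^ 2 / 2 := by fun_prop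
  have cp : Continuous fun z : ℝ × ℝ => expConv δ (fun y => U z.1 y ^ 2 / 2) z.2 :=
    expConv_cont hδ (f := fun τ y => U τ y ^ 2 / 2) cf hD
  have cq : Continuous fun z : ℝ × ℝ => expConv δ (V z.1) z.2 := expConv_cont hδ cV hB
  have hm := fun τ => slice_main hδ (h.cVs τ) (hB τ) (h.iV τ) (hn τ) (h.bot τ) (h.cUs τ) (hD τ) (h.iU τ) (hQ τ)
    (h.uBot τ) (by linarith : -R ≤ R)
  have hq : ∀ τ x, HasDerivAt (expConv δ (V τ)) (V τ x - δ * expConv δ (V τ) x) x :=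
    fun τ => expConv_hasDerivAt hδ (h.cVs τ) (hB τ)
  have hrt := h.r_time hB hδ
  obtain ⟨p, hpe⟩ : ∃ p : ℝ → ℝ → ℝ, p = fun τ => expConv δ (fun y => U τ y ^ 2 / 2) := ⟨_, rfl⟩
  obtain ⟨q, hqe⟩ : ∃ q : ℝ → ℝ → ℝ, q = fun τ => expConv δ (V τ) := ⟨_, rfl⟩
  have hp' : ∀ τ, expConv δ (fun y => U τ y ^ 2 / 2) = p τ := fun τ => by rw [hpe]
  have hq' : ∀ τ, expConv δ (V τ) = q τ := fun τ => by rw [hqe]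
  simp only [hp', hq'] at hrt hq hm cp cq ⊢
  set K := B * Q0 + √δ * (√n * Q0 + 2 * n + Q0 ^ 2) with hK
  have cs : ∀ W : ℝ → ℝ → ℝ, (Continuous fun z : ℝ × ℝ => W z.1 z.2) → ∀ τ α β, IntervalIntegrable (fun x => W τ x) volume α β :=
        fun W hW τ α β => (hW.comp (by fun_prop : Continuous fun x : ℝ => (τ, x))).intervalIntegrable _ _
  have ct : ∀ W : ℝ → ℝ → ℝ, (Continuous fun z : ℝ × ℝ => W z.1 z.2) → ∀ x, Continuous (fun τ => W τ x) :=
        fun W hW x => (hW.comp (by fun_prop : Continuous fun τ : ℝ => (τ, x)))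
  rw [aux_time_int (W := fun τ x => (V τ x - δ * q τ x) ^ 2)
    (Wt := fun τ x => 2 * (V τ x - δ * q τ x) * (γ * q τ x - U τ x ^ 2 / 2 + δ * p τ x)) (by fun_prop) (by fun_prop) hab]
  rotate_left
  · intro τ hτ x
    have := (hrt τ hτ x).fun_pow 2
    simpa using this
  have inner : ∀ τ, ∫ x in (-R)..R, 2 * (V τ x - δ * q τ x) * (γ * q τ x - U τ x ^ 2 / 2 + δ * p τ x)
      = γ * (q τ R ^ 2 - q τ (-R) ^ 2) + ∫ x in (-R)..R, (V τ x - δ * q τ x) * (-U τ x ^ 2 + 2 * δ * p τ x) := by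
    intro τ
    have e := integral_eq_sub_of_hasDerivAt (a := -R) (b := R) (f := fun x => γ * q τ x ^ 2) (fun x _ => ((hq τ x).fun_pow 2).const_mul γ)
      (cs (fun τ x => γ * (((2:ℕ):ℝ) * q τ x ^ (2-1) * (V τ x - δ * q τ x))) (by fun_prop) τ _ _)
    rw [mul_sub, ← e, ← intervalIntegral.integral_add
      (cs (fun τ x => γ * (((2:ℕ):ℝ) * q τ x ^ (2-1) * (V τ x - δ * q τ x))) (by fun_prop) τ _ _)
      (cs (fun τ x => (V τ x - δ * q τ x) * (-U τ x ^ 2 + 2 * δ * p τ x)) (by fun_prop) τ _ _)]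
    refine intervalIntegral.integral_congr fun x _ => ?_
    push_cast; ring
  have bd : ∀ τ, ‖∫ x in (-R)..R, 2 * (V τ x - δ * q τ x) * (γ * q τ x - U τ x ^ 2 / 2 + δ * p τ x)‖
      ≤ |γ| * (q τ R ^ 2 + q τ (-R) ^ 2) + K := by
    intro τ
    rw [inner τ]
    refine (abs_add_le _ _).trans (add_le_add ?_ (hm τ))
    rw [abs_mul]
    refine mul_le_mul_of_nonneg_left ?_ (abs_nonneg _)
    rw [abs_le]; constructor <;> nlinarith [sq_nonneg (q τ R), sq_nonneg (q τ (-R))]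
  have c1 : Continuous fun τ => (q τ R ^ 2 + q τ (-R) ^ 2) := by
    have := ct q cq R; have := ct q cq (-R); fun_prop
  have := intervalIntegral.norm_integral_le_of_norm_le (μ := volume) hab (Eventually.of_forall fun τ _ => bd τ)
    ((by fun_prop : Continuous fun τ => |γ| * (q τ R ^ 2 + q τ (-R) ^ 2) + K).intervalIntegrable _ _)
  refine this.trans (le_of_eq ?_)
  rw [intervalIntegral.integral_add ((by fun_prop : Continuous fun τ => |γ| * (q τ R ^ 2 + q τ (-R) ^ 2)).intervalIntegrable _ _)
    intervalIntegrable_const, intervalIntegral.integral_const_mul, intervalIntegral.integral_const, smul_eq_mul]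

end OHGood


namespace OHGood
variable {γ c a b : ℝ} {U V Ux : ℝ → ℝ → ℝ}

lemma Y_ineq_aux (h : OHGood γ c a b U V Ux) (hab : a ≤ b) {B n Q0 : ℝ} (hB : ∀ τ x, |V τ x| ≤ B)
    (hn : ∀ τ, ∫ x, V τ x ^ 2 ≤ n) (t s : ℝ)
    (hw : ∀ δ : ℝ, 0 < δ → ∀ R : ℝ, 0 ≤ R →
      (∫ x in (-R)..R, (V t x - δ * expConv δ (V t) x) ^ 2) - ∫ x in (-R)..R, (V s x - δ * expConv δ (V s) x) ^ 2
      ≤ |γ| * (∫ τ in a..b, (expConv δ (V τ) R ^ 2 + expConv δ (V τ) (-R) ^ 2))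
        + (b - a) * (B * Q0 + √δ * (√n * Q0 + 2 * n + Q0 ^ 2))) :
    ∫ x, V t x ^ 2 ≤ (∫ x, V s x ^ 2) + (b - a) * (B * Q0) := by
  have cV := h.cV
  have hB0 : 0 ≤ B := (abs_nonneg _).trans (hB 0 0)
  set K := √n * Q0 + 2 * n + Q0 ^ 2 with hK
  have qtop : ∀ δ : ℝ, 0 < δ → ∀ τ, Tendsto (expConv δ (V τ)) atTop (nhds 0) := fun δ hδ τ =>
    expConv_tendsto hδ (h.cVs τ) (hB τ) fun σ => (h.top τ).comp (tendsto_atTop_add_const_right _ (-σ) tendsto_id)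
  have qbot : ∀ δ : ℝ, 0 < δ → ∀ τ, Tendsto (expConv δ (V τ)) atBot (nhds 0) := fun δ hδ τ =>
    expConv_tendsto hδ (h.cVs τ) (hB τ) fun σ => (h.bot τ).comp (tendsto_atBot_add_const_right _ (-σ) tendsto_id)
  have cr : ∀ δ : ℝ, 0 < δ → ∀ τ, Continuous fun x => V τ x - δ * expConv δ (V τ) x := by
    intro δ hδ τ
    have c1 : Continuous (expConv δ (V τ)) :=
      continuous_iff_continuousAt.2 fun x => (expConv_hasDerivAt hδ (h.cVs τ) (hB τ) x).continuousAt
    have c2 := h.cVs τ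
    fun_prop
  have step1 : ∀ δ : ℝ, 0 < δ → ∀ R0 : ℝ, 0 ≤ R0 →
      ∫ x in (-R0)..R0, (V t x - δ * expConv δ (V t) x) ^ 2 ≤ (∫ x, V s x ^ 2) + (b - a) * (B * Q0 + √δ * K) := by
    intro δ hδ R0 hR0
    have cq : Continuous fun z : ℝ × ℝ => expConv δ (V z.1) z.2 := expConv_cont hδ cV hB
    have l1 : Tendsto (fun R : ℝ => ∫ τ in a..b, (expConv δ (V τ) R ^ 2 + expConv δ (V τ) (-R) ^ 2)) atTop
        (nhds (∫ τ in a..b, (0:ℝ))) := by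
      refine intervalIntegral.tendsto_integral_filter_of_dominated_convergence
        (fun _ => 2 * (B / δ) ^ 2) ?_ ?_ intervalIntegrable_const ?_
      · refine Eventually.of_forall fun R => Continuous.aestronglyMeasurable ?_
        exact ((cq.comp (by fun_prop : Continuous fun τ : ℝ => (τ, R))).pow 2).add
          ((cq.comp (by fun_prop : Continuous fun τ : ℝ => (τ, -R))).pow 2)
      · refine Eventually.of_forall fun R => Eventually.of_forall fun τ _ => ?_
        have bq : ∀ x, expConv δ (V τ) x ^ 2 ≤ (B / δ) ^ 2 := fun x => by
          rw [← sq_abs]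
          have := expConv_bound hδ (hB τ) x
          gcongr
        rw [Real.norm_of_nonneg (by positivity)]
        linarith [bq R, bq (-R)]
      · refine Eventually.of_forall fun τ _ => ?_
        have := ((qtop δ hδ τ).pow 2).add (((qbot δ hδ τ).comp tendsto_neg_atTop_atBot).pow 2)
        simpa using this
    have l2 : Tendsto (fun R : ℝ => expConv δ (V s) (-R)) atTop (nhds 0) :=
      (qbot δ hδ s).comp tendsto_neg_atTop_atBot
    have l3 : Tendsto (fun R : ℝ => ((∫ x, V s x ^ 2) + δ * expConv δ (V s) (-R) ^ 2)
        + (|γ| * (∫ τ in a..b, (expConv δ (V τ) R ^ 2 + expConv δ (V τ) (-R) ^ 2))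
        + (b - a) * (B * Q0 + √δ * K))) atTop
        (nhds (((∫ x, V s x ^ 2) + δ * 0 ^ 2) + (|γ| * (∫ τ in a..b, (0:ℝ)) + (b - a) * (B * Q0 + √δ * K)))) :=
      (((l2.pow 2).const_mul δ).const_add _).add ((l1.const_mul _).add_const _)
    have l4 := ge_of_tendsto l3 (b := ∫ x in (-R0)..R0, (V t x - δ * expConv δ (V t) x) ^ 2) ?_
    · simpa using l4
    · filter_upwards [eventually_ge_atTop R0] with R hR
      have w := hw δ hδ R (hR0.trans hR)
      have w2 := slice_r2 hδ (h.cVs s) (hB s) (h.iV s) (by linarith : -R ≤ R)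
      have w3 : ∫ x in (-R0)..R0, (V t x - δ * expConv δ (V t) x) ^ 2 ≤ ∫ x in (-R)..R, (V t x - δ * expConv δ (V t) x) ^ 2 := by
        refine intervalIntegral.integral_mono_interval (by linarith) (by linarith) hR ?_ ?_
        · exact Eventually.of_forall fun x => sq_nonneg _
        · exact ((cr δ hδ t).pow 2).intervalIntegrable _ _
      linarith
  refine aux_total_le (h.iV t) fun R0 hR0 => ?_
  have step2 : ∀ δ : ℝ, 0 < δ → ∫ x in (-R0)..R0, V t x ^ 2 ≤
      (∫ x, V s x ^ 2) + (b - a) * (B * Q0 + √δ * K) + (R0 - -R0) * (2 * B * (√δ * √n)) := by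
    intro δ hδ
    have hdq := slice_dq hδ (h.cVs t) (hB t) (h.iV t) (hn t) (h.bot t)
    have hm : ∫ x in (-R0)..R0, V t x ^ 2 ≤ ∫ x in (-R0)..R0, ((V t x - δ * expConv δ (V t) x) ^ 2 + 2 * B * (√δ * √n)) := by
      refine integral_mono_on (by linarith) (((h.cVs t).pow 2).intervalIntegrable _ _) ((((cr δ hδ t).pow 2).add continuous_const).intervalIntegrable _ _) fun x _ => ?_
      have h1 : V t x * (δ * expConv δ (V t) x) ≤ B * (√δ * √n) := by
        refine (le_abs_self _).trans ?_
        rw [abs_mul]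
        exact mul_le_mul (hB t x) (hdq x) (abs_nonneg _) hB0
      nlinarith [sq_nonneg (δ * expConv δ (V t) x)]
    have ii : IntervalIntegrable (fun x => (V t x - δ * expConv δ (V t) x) ^ 2) volume (-R0) R0 :=
      ((cr δ hδ t).pow 2).intervalIntegrable _ _
    rw [intervalIntegral.integral_add ii intervalIntegrable_const,
      intervalIntegral.integral_const, smul_eq_mul] at hm
    linarith [step1 δ hδ R0 hR0]
  have lim : Tendsto (fun δ : ℝ => (∫ x, V s x ^ 2) + (b - a) * (B * Q0 + √δ * K) + (R0 - -R0) * (2 * B * (√δ * √n)))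
      (nhdsWithin 0 (Ioi 0)) (nhds ((∫ x, V s x ^ 2) + (b - a) * (B * Q0 + √0 * K) + (R0 - -R0) * (2 * B * (√0 * √n)))) := by
    apply Tendsto.mono_left _ nhdsWithin_le_nhds
    exact (by fun_prop : Continuous fun δ : ℝ => (∫ x, V s x ^ 2) + (b - a) * (B * Q0 + √δ * K) + (R0 - -R0) * (2 * B * (√δ * √n))).tendsto 0
  have := ge_of_tendsto lim (by filter_upwards [self_mem_nhdsWithin] with δ hδ using step2 δ hδ)
  simpa using this

lemma Y_ineq (h : OHGood γ c a b U V Ux) (hab : a ≤ b) {B n Q0 : ℝ} (hB : ∀ τ x, |V τ x| ≤ B)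
    (hQ : ∀ τ, ∫ x, U τ x ^ 2 ≤ Q0) (hn : ∀ τ, ∫ x, V τ x ^ 2 ≤ n) :
    ∫ x, V b x ^ 2 ≤ (∫ x, V a x ^ 2) + (b - a) * (B * Q0) ∧
    ∫ x, V a x ^ 2 ≤ (∫ x, V b x ^ 2) + (b - a) * (B * Q0) := by
  constructor
  · exact h.Y_ineq_aux hab hB hn b a fun δ hδ R hR => (le_abs_self _).trans (h.Y_window hab hB hQ hn hδ hR)
  · refine h.Y_ineq_aux hab hB hn a b fun δ hδ R hR => (le_abs_self _).trans ?_
    rw [abs_sub_comm]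
    exact h.Y_window hab hB hQ hn hδ hR
end OHGood

structure OHOn (γ c a b : ℝ) (U V Ux : ℝ → ℝ → ℝ) : Prop where
  cU : ContinuousOn (fun p : ℝ × ℝ => U p.1 p.2) (Icc a b ×ˢ univ)
  cV : ContinuousOn (fun p : ℝ × ℝ => V p.1 p.2) (Icc a b ×ˢ univ)
  cUx : ContinuousOn (fun p : ℝ × ℝ => Ux p.1 p.2) (Icc a b ×ˢ univ)
  dU : ∀ τ ∈ Icc a b, ∀ x, HasDerivAt (U τ) (Ux τ x) x
  dV : ∀ τ ∈ Icc a b, ∀ x, HasDerivAt (V τ) (U τ x) x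
  dt : ∀ τ ∈ Ioo a b, ∀ x, HasDerivAt (fun s => U s x) (γ * V τ x - U τ x * Ux τ x) τ
  low : ∀ τ ∈ Icc a b, ∀ x, c ≤ Ux τ x
  iU : ∀ τ ∈ Icc a b, Integrable fun x => U τ x ^ 2
  iV : ∀ τ ∈ Icc a b, Integrable fun x => V τ x ^ 2
  top : ∀ τ ∈ Icc a b, Tendsto (V τ) atTop (nhds 0)
  bot : ∀ τ ∈ Icc a b, Tendsto (V τ) atBot (nhds 0)

namespace OHOn
variable {γ c a b : ℝ} {U V Ux : ℝ → ℝ → ℝ}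

lemma mono (h : OHOn γ c a b U V Ux) {a' b' : ℝ} (ha : a ≤ a') (hb : b' ≤ b) :
    OHOn γ c a' b' U V Ux where
  cU := h.cU.mono (prod_mono (Icc_subset_Icc ha hb) subset_rfl)
  cV := h.cV.mono (prod_mono (Icc_subset_Icc ha hb) subset_rfl)
  cUx := h.cUx.mono (prod_mono (Icc_subset_Icc ha hb) subset_rfl)
  dU := fun τ hτ => h.dU τ (Icc_subset_Icc ha hb hτ)
  dV := fun τ hτ => h.dV τ (Icc_subset_Icc ha hb hτ)
  dt := fun τ hτ => h.dt τ (Ioo_subset_Ioo ha hb hτ)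
  low := fun τ hτ => h.low τ (Icc_subset_Icc ha hb hτ)
  iU := fun τ hτ => h.iU τ (Icc_subset_Icc ha hb hτ)
  iV := fun τ hτ => h.iV τ (Icc_subset_Icc ha hb hτ)
  top := fun τ hτ => h.top τ (Icc_subset_Icc ha hb hτ)
  bot := fun τ hτ => h.bot τ (Icc_subset_Icc ha hb hτ)

lemma clampMem (hab : a ≤ b) (τ : ℝ) : max a (min b τ) ∈ Icc a b :=
  ⟨le_max_left _ _, max_le hab (min_le_left _ _)⟩

lemma clampEq {τ : ℝ} (h : τ ∈ Icc a b) : max a (min b τ) = τ := by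
  rw [min_eq_right h.2, max_eq_right h.1]

lemma good (h : OHOn γ c a b U V Ux) (hab : a ≤ b) :
    OHGood γ c a b (fun τ => U (max a (min b τ))) (fun τ => V (max a (min b τ))) (fun τ => Ux (max a (min b τ))) := by
  have cc : ∀ W : ℝ → ℝ → ℝ, ContinuousOn (fun p : ℝ × ℝ => W p.1 p.2) (Icc a b ×ˢ univ) →
      Continuous fun p : ℝ × ℝ => W (max a (min b p.1)) p.2 := by
    intro W hW
    exact hW.comp_continuous (f := fun p : ℝ × ℝ => (max a (min b p.1), p.2)) (by fun_prop)
      fun p => ⟨clampMem hab _, mem_univ _⟩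
  constructor
  · exact cc U h.cU
  · exact cc V h.cV
  · exact cc Ux h.cUx
  · exact fun τ => h.dU _ (clampMem hab τ)
  · exact fun τ => h.dV _ (clampMem hab τ)
  · intro τ hτ x
    have := h.dt τ hτ x
    simp only [clampEq (Ioo_subset_Icc_self hτ)]
    refine this.congr_of_eventuallyEq ?_
    filter_upwards [Ioo_mem_nhds hτ.1 hτ.2] with t ht
    rw [clampEq (Ioo_subset_Icc_self ht)]
  · exact fun τ => h.low _ (clampMem hab τ)
  · exact fun τ => h.iU _ (clampMem hab τ)
  · exact fun τ => h.iV _ (clampMem hab τ)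
  · exact fun τ => h.top _ (clampMem hab τ)
  · exact fun τ => h.bot _ (clampMem hab τ)

lemma sob (h : OHOn γ c a b U V Ux) (τ : ℝ) (hτ : τ ∈ Icc a b) (x : ℝ) :
    2 * V τ x ^ 2 ≤ (∫ x, U τ x ^ 2) + ∫ x, V τ x ^ 2 := by
  have := (h.good (hτ.1.trans hτ.2)).sob τ x
  simpa only [clampEq hτ] using this

lemma Qcons (h : OHOn γ c a b U V Ux) (hab : a ≤ b) {B : ℝ} (hB : ∀ τ ∈ Icc a b, ∀ x, |V τ x| ≤ B) :
    ∫ x, U b x ^ 2 = ∫ x, U a x ^ 2 := by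
  have := (h.good hab).Qcons hab (B := B) fun τ => hB _ (clampMem hab τ)
  simpa only [clampEq (left_mem_Icc.2 hab), clampEq (right_mem_Icc.2 hab)] using this

lemma Y_ineq (h : OHOn γ c a b U V Ux) (hab : a ≤ b) {B n Q0 : ℝ} (hB : ∀ τ ∈ Icc a b, ∀ x, |V τ x| ≤ B)
    (hQ : ∀ τ ∈ Icc a b, ∫ x, U τ x ^ 2 ≤ Q0) (hn : ∀ τ ∈ Icc a b, ∫ x, V τ x ^ 2 ≤ n) :
    ∫ x, V b x ^ 2 ≤ (∫ x, V a x ^ 2) + (b - a) * (B * Q0) ∧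
    ∫ x, V a x ^ 2 ≤ (∫ x, V b x ^ 2) + (b - a) * (B * Q0) := by
  have := (h.good hab).Y_ineq hab (B := B) (n := n) (Q0 := Q0) (fun τ => hB _ (clampMem hab τ))
    (fun τ => hQ _ (clampMem hab τ)) (fun τ => hn _ (clampMem hab τ))
  simpa only [clampEq (left_mem_Icc.2 hab), clampEq (right_mem_Icc.2 hab)] using this

lemma Qnonneg (τ : ℝ) : 0 ≤ ∫ x, U τ x ^ 2 := integral_nonneg fun x => sq_nonneg _

/-- under a qualitative bound, Q is constant -/
lemma Qconst (h : OHOn γ c a b U V Ux) {n : ℝ}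
    (hn : ∀ τ ∈ Icc a b, (∫ x, U τ x ^ 2) + ∫ x, V τ x ^ 2 ≤ n) {s t : ℝ} (hs : s ∈ Icc a b) (ht : t ∈ Icc a b) :
    ∫ x, U s x ^ 2 = ∫ x, U t x ^ 2 := by
  have hB : ∀ τ ∈ Icc a b, ∀ x, |V τ x| ≤ √n := by
    intro τ hτ x
    apply Real.abs_le_sqrt
    have := h.sob τ hτ x
    have := hn τ hτ
    nlinarith [sq_nonneg (V τ x)]
  rcases le_total s t with hst | hst
  · exact ((h.mono hs.1 ht.2).Qcons hst fun τ hτ => hB τ ⟨hs.1.trans hτ.1, hτ.2.trans ht.2⟩).symm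
  · exact ((h.mono ht.1 hs.2).Qcons hst fun τ hτ => hB τ ⟨ht.1.trans hτ.1, hτ.2.trans hs.2⟩)

/-- Lipschitz in time bound for Y -/
lemma Ylip (h : OHOn γ c a b U V Ux) {n B : ℝ}
    (hn : ∀ τ ∈ Icc a b, (∫ x, U τ x ^ 2) + ∫ x, V τ x ^ 2 ≤ n)
    {s t : ℝ} (hs : s ∈ Icc a b) (ht : t ∈ Icc a b)
    (hB : ∀ τ ∈ uIcc s t, ∀ x, |V τ x| ≤ B) :
    ∫ x, V t x ^ 2 ≤ (∫ x, V s x ^ 2) + |t - s| * (B * ∫ x, U a x ^ 2) := by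
  have ha : a ∈ Icc a b := ⟨le_rfl, hs.1.trans hs.2⟩
  have hn' : ∀ τ ∈ Icc a b, ∫ x, V τ x ^ 2 ≤ n := fun τ hτ => by
    have := hn τ hτ
    have := Qnonneg (U := U) τ
    linarith
  rcases le_total s t with hst | hst
  · rw [abs_of_nonneg (by linarith)]
    rw [uIcc_of_le hst] at hB
    have hsub : ∀ τ ∈ Icc s t, τ ∈ Icc a b := fun τ hτ => ⟨hs.1.trans hτ.1, hτ.2.trans ht.2⟩
    exact ((h.mono hs.1 ht.2).Y_ineq hst hB (fun τ hτ => (h.Qconst hn (hsub τ hτ) ha).le) (fun τ hτ => hn' τ (hsub τ hτ))).1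
  · rw [abs_of_nonpos (by linarith), neg_sub]
    rw [uIcc_of_ge hst] at hB
    have hsub : ∀ τ ∈ Icc t s, τ ∈ Icc a b := fun τ hτ => ⟨ht.1.trans hτ.1, hτ.2.trans hs.2⟩
    exact ((h.mono ht.1 hs.2).Y_ineq hst hB (fun τ hτ => (h.Qconst hn (hsub τ hτ) ha).le) (fun τ hτ => hn' τ (hsub τ hτ))).2

/-- quantitative a priori bound -/
lemma apriori (h : OHOn γ c a b U V Ux) {n : ℝ}
    (hn : ∀ τ ∈ Icc a b, (∫ x, U τ x ^ 2) + ∫ x, V τ x ^ 2 ≤ n) {s t : ℝ} (hs : s ∈ Icc a b) (ht : t ∈ Icc a b) :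
    ∫ x, V t x ^ 2 ≤ 2 * ((∫ x, V s x ^ 2) + (b - a) ^ 2 * (∫ x, U s x ^ 2) ^ 2 + ∫ x, U s x ^ 2) := by
  have ha : a ∈ Icc a b := ⟨le_rfl, hs.1.trans hs.2⟩
  have hn' : ∀ τ ∈ Icc a b, ∫ x, V τ x ^ 2 ≤ n := fun τ hτ => by
    have := hn τ hτ
    have := Qnonneg (U := U) τ
    linarith
  set Y : ℝ → ℝ := fun τ => ∫ x, V τ x ^ 2 with hY
  set S := sSup (Y '' Icc a b) with hS
  have bdd : BddAbove (Y '' Icc a b) := ⟨n, by rintro _ ⟨τ, hτ, rfl⟩; exact hn' τ hτ⟩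
  have hle : ∀ τ ∈ Icc a b, Y τ ≤ S := fun τ hτ => le_csSup bdd ⟨τ, hτ, rfl⟩
  set Q := ∫ x, U a x ^ 2 with hQ
  rw [h.Qconst hn hs ha]
  have hQ0 : 0 ≤ Q := Qnonneg (U := U) a
  have hS0 : 0 ≤ S := (Qnonneg (U := V) a).trans (hle a ha)
  have hB : ∀ τ ∈ Icc a b, ∀ x, |V τ x| ≤ √((Q + S) / 2) := by
    intro τ hτ x
    apply Real.abs_le_sqrt
    have h1 := h.sob τ hτ x
    have h2 := hle τ hτ
    rw [h.Qconst hn hτ ha] at h1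
    simp only [hY] at h2
    linarith
  have hsup : S ≤ Y s + ((b - a) ^ 2 * Q ^ 2 / 2 + (Q + S) / 4) := by
    refine csSup_le ⟨_, ⟨a, ha, rfl⟩⟩ ?_
    rintro _ ⟨τ, hτ, rfl⟩
    have h1 := h.Ylip hn hs hτ (B := √((Q + S) / 2)) fun σ hσ => hB σ (by
      exact (uIcc_subset_Icc hs hτ) hσ)
    refine h1.trans (add_le_add le_rfl ?_)
    have h2 : |τ - s| ≤ b - a := by rw [abs_le]; constructor <;> linarith [hτ.1, hτ.2, hs.1, hs.2]
    have h3 : |τ - s| * (√((Q + S) / 2) * Q) ≤ (b - a) * (√((Q + S) / 2) * Q) :=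
      mul_le_mul_of_nonneg_right h2 (by positivity)
    refine h3.trans ?_
    have h4 : √((Q + S) / 2) ^ 2 = (Q + S) / 2 := Real.sq_sqrt (by positivity)
    nlinarith [sq_nonneg ((b - a) * Q - √((Q + S) / 2))]
  have := hle t ht
  have hYs : 0 ≤ Y s := Qnonneg (U := V) s
  have : 0 ≤ (b - a) ^ 2 * Q ^ 2 := by positivity
  change Y t ≤ 2 * (Y s + _ + _)
  linarith

end OHOn

/-- Baire category argument -/
lemma aux_baire {T : ℝ} {N : ℝ → ℝ} (F : ℕ → Set ℝ) (hF : ∀ n, IsClosed (F n))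
    (hNF : ∀ n : ℕ, ∀ t ∈ Ioo 0 T, (N t ≤ n ↔ t ∈ F n))
    (hprop : ∀ n : ℝ, ∃ n' : ℝ, ∀ a b, 0 < a → a ≤ b → b < T →
      (∀ t ∈ Ioo a b, ∃ r > 0, ∃ m, ∀ s ∈ Ioo (t - r) (t + r), N s ≤ m) → (N a ≤ n ∨ N b ≤ n) → ∀ t ∈ Icc a b, N t ≤ n') :
    ∀ t ∈ Ioo 0 T, ∃ r > 0, ∃ m, ∀ s ∈ Ioo (t - r) (t + r), N s ≤ m := by
  by_contra hcon
  push Not at hcon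
  obtain ⟨t₁, ht₁, hbad₁⟩ := hcon
  set G : Set ℝ := {t | ∃ r > 0, ∃ m, ∀ s ∈ Ioo (t - r) (t + r), N s ≤ m} with hG
  have oG : IsOpen G := by
    rw [Metric.isOpen_iff]
    rintro t ⟨r, hr, m, hm⟩
    refine ⟨r / 2, by positivity, fun s hs => ⟨r / 2, by positivity, m, fun z hz => hm z ?_⟩⟩
    rw [Metric.mem_ball, Real.dist_eq, abs_lt] at hs
    constructor <;> linarith [hz.1, hz.2]
  set K : Set ℝ := Ioo 0 T ∩ Gᶜ with hK
  have hKl : IsLocallyClosed K := isOpen_Ioo.isLocallyClosed.inter oG.isClosed_compl.isLocallyClosed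
  haveI : LocallyCompactSpace K := hKl.locallyCompactSpace
  have ht₁K : t₁ ∈ K := by
    refine ⟨ht₁, ?_⟩
    rintro ⟨r, hr, m, hm⟩
    obtain ⟨s, hs, hs'⟩ := hbad₁ r hr m
    exact absurd (hm s hs) (not_le.2 hs')
  haveI : Nonempty K := ⟨⟨t₁, ht₁K⟩⟩
  obtain ⟨n, hn⟩ := nonempty_interior_of_iUnion_of_closed (X := K) (f := fun n => Subtype.val ⁻¹' F n)
    (fun n => (hF n).preimage continuous_subtype_val) (by
      ext ⟨t, ht⟩
      simp only [mem_iUnion, mem_preimage, mem_univ, iff_true]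
      obtain ⟨n, hn⟩ := exists_nat_ge (N t)
      exact ⟨n, (hNF n t ht.1).1 hn⟩)
  obtain ⟨⟨t₀, ht₀⟩, hi⟩ := hn
  rw [mem_interior_iff_mem_nhds, nhds_subtype_eq_comap, mem_comap] at hi
  obtain ⟨O, hO, hOF⟩ := hi
  obtain ⟨r, hr, hrO⟩ := Metric.mem_nhds_iff.1 (inter_mem hO (isOpen_Ioo.mem_nhds ht₀.1))
  have hball : ∀ s ∈ Ioo (t₀ - r) (t₀ + r), s ∈ O ∧ s ∈ Ioo 0 T := fun s hs => hrO (by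
    rw [Metric.mem_ball, Real.dist_eq, abs_lt]; constructor <;> linarith [hs.1, hs.2])
  have hKn : ∀ s ∈ Ioo (t₀ - r) (t₀ + r), s ∈ K → N s ≤ n := fun s hs hsK =>
    (hNF n s hsK.1).2 (hOF (show (⟨s, hsK⟩ : K) ∈ Subtype.val ⁻¹' O from (hball s hs).1))
  obtain ⟨n', hn'⟩ := hprop n
  refine ht₀.2 ⟨r, hr, n', fun s hs => ?_⟩
  have ht₀mem : t₀ ∈ Ioo (t₀ - r) (t₀ + r) := ⟨by linarith, by linarith⟩
  rcases le_total t₀ s with hts | hts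
  · -- largest bad time in [t₀, s]
    have hcomp : IsCompact (Icc t₀ s ∩ Gᶜ) := isCompact_Icc.inter_right oG.isClosed_compl
    obtain ⟨a, ha, hamax⟩ := hcomp.exists_isGreatest ⟨t₀, ⟨le_rfl, hts⟩, ht₀.2⟩
    have haI : a ∈ Ioo (t₀ - r) (t₀ + r) := ⟨by linarith [ha.1.1], ha.1.2.trans_lt hs.2⟩
    have haT := (hball a haI).2
    refine hn' a s haT.1 ha.1.2 (hball s hs).2.2 (fun t ht => ?_) (Or.inl (hKn a haI ⟨haT, ha.2⟩)) s ⟨ha.1.2, le_rfl⟩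
    by_contra htG
    exact absurd (hamax ⟨⟨ha.1.1.trans ht.1.le, ht.2.le⟩, htG⟩) (not_le.2 ht.1)
  · have hcomp : IsCompact (Icc s t₀ ∩ Gᶜ) := isCompact_Icc.inter_right oG.isClosed_compl
    obtain ⟨a, ha, hamin⟩ := hcomp.exists_isLeast ⟨t₀, ⟨hts, le_rfl⟩, ht₀.2⟩
    have haI : a ∈ Ioo (t₀ - r) (t₀ + r) := ⟨hs.1.trans_le ha.1.1, by linarith [ha.1.2]⟩
    have haT := (hball a haI).2
    refine hn' s a (hball s hs).2.1 ha.1.1 haT.2 (fun t ht => ?_) (Or.inr (hKn a haI ⟨haT, ha.2⟩)) s ⟨le_rfl, ha.1.1⟩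
    by_contra htG
    exact absurd (hamin ⟨⟨ht.1.le, ht.2.le.trans ha.1.2⟩, htG⟩) (not_le.2 ht.2)


lemma aux_clamp_cont {a b : ℝ} (hab : a ≤ b) {W : ℝ → ℝ → ℝ}
    (hW : ContinuousOn (fun p : ℝ × ℝ => W p.1 p.2) (Icc a b ×ˢ univ)) :
    Continuous fun p : ℝ × ℝ => W (max a (min b p.1)) p.2 :=
  hW.comp_continuous (f := fun p : ℝ × ℝ => (max a (min b p.1), p.2)) (by fun_prop)
      fun p => ⟨OHOn.clampMem hab _, mem_univ _⟩

lemma aux_win_cont {a b : ℝ} {W : ℝ → ℝ → ℝ}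
    (hW : ContinuousOn (fun p : ℝ × ℝ => W p.1 p.2) (Icc a b ×ˢ univ)) (α β : ℝ) :
    ContinuousOn (fun s => ∫ x in α..β, W s x) (Icc a b) := by
  rcases lt_or_ge b a with h | hab
  · rw [Icc_eq_empty (not_le.2 h)]; exact continuousOn_empty _
  have := (aux_param_cont (G := fun τ => W (max a (min b τ))) (aux_clamp_cont hab hW) α β).continuousOn (s := Icc a b)
  refine this.congr fun s hs => ?_
  simp only [OHOn.clampEq hs]

lemma OHOn.Nstep {γ c a b : ℝ} {U V Ux : ℝ → ℝ → ℝ} (h : OHOn γ c a b U V Ux) {n k : ℝ}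
    (hn : ∀ τ ∈ Icc a b, (∫ x, U τ x ^ 2) + ∫ x, V τ x ^ 2 ≤ n) {s t : ℝ} (hs : s ∈ Icc a b) (ht : t ∈ Icc a b)
    (hk : (∫ x, U s x ^ 2) + ∫ x, V s x ^ 2 ≤ k) :
    (∫ x, U t x ^ 2) + ∫ x, V t x ^ 2 ≤ k + 2 * (k + (b - a) ^ 2 * k ^ 2 + k) := by
  have h1 := h.apriori hn hs ht
  have h2 := h.Qconst hn hs ht
  have h3 := OHOn.Qnonneg (U := U) s
  have h4 := OHOn.Qnonneg (U := V) s
  have h5 : (∫ x, U s x ^ 2) ^ 2 ≤ k ^ 2 := pow_le_pow_left₀ h3 (by linarith) 2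
  have h6 := mul_le_mul_of_nonneg_left h5 (sq_nonneg (b - a))
  linarith

lemma aux_compact_bdd {N : ℝ → ℝ} {a b : ℝ}
    (h : ∀ t ∈ Icc a b, ∃ r > 0, ∃ m, ∀ s ∈ Ioo (t - r) (t + r), N s ≤ m) : ∃ m, ∀ t ∈ Icc a b, N t ≤ m := by
  refine isCompact_Icc.induction_on (p := fun s => ∃ m, ∀ t ∈ s, N t ≤ m) ⟨0, by simp⟩ ?_ ?_ ?_
  · rintro s t hst ⟨m, hm⟩
    exact ⟨m, fun x hx => hm x (hst hx)⟩
  · rintro s t ⟨m, hm⟩ ⟨m', hm'⟩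
    refine ⟨max m m', ?_⟩
    rintro x (hx | hx)
    · exact (hm x hx).trans (le_max_left _ _)
    · exact (hm' x hx).trans (le_max_right _ _)
  · intro t ht
    obtain ⟨r, hr, m, hm⟩ := h t ht
    exact ⟨Ioo (t - r) (t + r), mem_nhdsWithin_of_mem_nhds (Ioo_mem_nhds (by linarith) (by linarith)), m, hm⟩

lemma oh_bdd {γ c T : ℝ} {U V Ux : ℝ → ℝ → ℝ}
    (hO : ∀ a b, 0 < a → b < T → OHOn γ c a b U V Ux) :
    ∀ b < T, ∃ n, ∀ t ∈ Ioc 0 b, (∫ x, U t x ^ 2) + ∫ x, V t x ^ 2 ≤ n := by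
  set N : ℝ → ℝ := fun t => (∫ x, U t x ^ 2) + ∫ x, V t x ^ 2 with hN
  -- windows
  have hwin : ∀ t ∈ Ioo 0 T, ∀ n : ℝ, (∀ R : ℝ, 0 ≤ R → ∫ x in (-R)..R, (U t x ^ 2 + V t x ^ 2) ≤ n) → N t ≤ n := by
    intro t ht n hR
    have o := hO t t ht.1 ht.2
    have tt : t ∈ Icc t t := ⟨le_rfl, le_rfl⟩
    have := aux_total_le ((o.iU t tt).add (o.iV t tt)) hR
    simp only [hN]
    rw [← integral_add (o.iU t tt) (o.iV t tt)] 
    exact this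
  have hwin' : ∀ t ∈ Ioo 0 T, ∀ R : ℝ, 0 ≤ R → ∫ x in (-R)..R, (U t x ^ 2 + V t x ^ 2) ≤ N t := by
    intro t ht R hR
    have o := hO t t ht.1 ht.2
    have tt : t ∈ Icc t t := ⟨le_rfl, le_rfl⟩
    have := aux_window_le ((o.iU t tt).add (o.iV t tt)) (fun x => by simp only [Pi.add_apply]; positivity) (by linarith : -R ≤ R)
    simp only [hN]
    rw [← integral_add (o.iU t tt) (o.iV t tt)] 
    exact this
  have loc : ∀ t ∈ Ioo 0 T, ∃ r > 0, ∃ m, ∀ s ∈ Ioo (t - r) (t + r), N s ≤ m := by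
    refine aux_baire (fun n => closure {t ∈ Ioo 0 T | N t ≤ n}) (fun n => isClosed_closure) ?_ ?_
    · intro n t ht
      refine ⟨fun h => subset_closure ⟨ht, h⟩, fun h => ?_⟩
      refine hwin t ht n fun R hR => ?_
      obtain ⟨s, hs, hlim⟩ := mem_closure_iff_seq_limit.1 h
      obtain ⟨a, ha0, hat⟩ := exists_between ht.1
      obtain ⟨b, htb, hbT⟩ := exists_between ht.2
      have o := hO a b ha0 hbT
      have hc : ContinuousAt (fun s => ∫ x in (-R)..R, (U s x ^ 2 + V s x ^ 2)) t :=
        (aux_win_cont (W := fun s x => U s x ^ 2 + V s x ^ 2) ((o.cU.pow 2).add (o.cV.pow 2)) (-R) R).continuousAt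
          (Icc_mem_nhds hat htb)
      refine le_of_tendsto (hc.tendsto.comp hlim) (Eventually.of_forall fun k => ?_)
      exact (hwin' _ (hs k).1 R hR).trans (hs k).2
    · intro n
      refine ⟨max n 0 + 2 * (max n 0 + T ^ 2 * (max n 0) ^ 2 + max n 0), fun a b ha hab hbT hloc hor => ?_⟩
      have hk0 : 0 ≤ max n 0 := le_max_right _ _
      have hTT : 0 ≤ T ^ 2 * (max n 0) ^ 2 := by positivity
      rcases hab.eq_or_lt with rfl | hab'
      · intro t ht
        have : t = a := le_antisymm ht.2 ht.1
        subst this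
        have : N t ≤ n := by tauto
        linarith [le_max_left n 0]
      have hmid : ∀ t ∈ Ioo a b, N t ≤ N ((a+b)/2) + 2 * (N ((a+b)/2) + (b-a) ^ 2 * N ((a+b)/2) ^ 2 + N ((a+b)/2)) := by
        intro t ht
        set p := min t ((a+b)/2) with hp
        set q := max t ((a+b)/2) with hq
        have hap : a < p := lt_min ht.1 (by linarith)
        have hqb : q < b := max_lt ht.2 (by linarith)
        have hpt : p ≤ t := min_le_left _ _
        have hpm : p ≤ (a+b)/2 := min_le_right _ _
        have htq : t ≤ q := le_max_left _ _
        have hmq : (a+b)/2 ≤ q := le_max_right _ _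
        obtain ⟨m, hm⟩ := aux_compact_bdd (N := N) (a := p) (b := q) fun t ht => hloc t ⟨hap.trans_le ht.1, ht.2.trans_lt hqb⟩
        have := (hO p q (ha.trans hap) (hqb.trans hbT)).Nstep hm (s := (a+b)/2) (t := t) ⟨hpm, hmq⟩ ⟨hpt, htq⟩ le_rfl
        refine this.trans ?_
        have : (q - p) ^ 2 ≤ (b - a) ^ 2 := pow_le_pow_left₀ (by linarith) (by linarith) 2
        have := mul_le_mul_of_nonneg_right this (sq_nonneg (N ((a+b)/2)))
        simp only [hN] at this ⊢
        linarith
      have hall : ∃ m, ∀ t ∈ Icc a b, N t ≤ m := by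
        refine ⟨max (max (N a) (N b)) (N ((a+b)/2) + 2 * (N ((a+b)/2) + (b-a) ^ 2 * N ((a+b)/2) ^ 2 + N ((a+b)/2))), fun t ht => ?_⟩
        rcases ht.1.eq_or_lt with rfl | h1
        · exact le_max_of_le_left (le_max_left _ _)
        rcases ht.2.eq_or_lt with rfl | h2
        · exact le_max_of_le_left (le_max_right _ _)
        exact le_max_of_le_right (hmid t ⟨h1, h2⟩)
      obtain ⟨m, hm⟩ := hall
      intro t ht
      have key : N t ≤ max n 0 + 2 * (max n 0 + (b-a) ^ 2 * (max n 0) ^ 2 + max n 0) := by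
        rcases hor with h | h
        · exact (hO a b ha hbT).Nstep hm (left_mem_Icc.2 hab) ht (h.trans (le_max_left _ _))
        · exact (hO a b ha hbT).Nstep hm (right_mem_Icc.2 hab) ht (h.trans (le_max_left _ _))
      have : (b - a) ^ 2 ≤ T ^ 2 := pow_le_pow_left₀ (by linarith) (by linarith) 2
      have := mul_le_mul_of_nonneg_right this (sq_nonneg (max n 0))
      linarith
  intro b hb
  rcases le_or_gt b 0 with hb0 | hb0
  · exact ⟨0, fun t ht => absurd (ht.1.trans_le ht.2) (not_lt.2 hb0)⟩
  refine ⟨N b + 2 * (N b + b ^ 2 * (N b) ^ 2 + N b), fun t ht => ?_⟩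
  obtain ⟨m, hm⟩ := aux_compact_bdd (N := N) (a := t) (b := b) fun s hs => loc s ⟨ht.1.trans_le hs.1, hs.2.trans_lt hb⟩
  have key := (hO t b ht.1 hb).Nstep hm (right_mem_Icc.2 ht.2) (left_mem_Icc.2 ht.2) le_rfl
  refine key.trans ?_
  have : (b - t) ^ 2 ≤ b ^ 2 := pow_le_pow_left₀ (by linarith [ht.2]) (by linarith [ht.1]) 2
  have := mul_le_mul_of_nonneg_right this (sq_nonneg (N b))
  simp only [hN] at this ⊢
  linarith

lemma aux_Iic_deriv {f : ℝ → ℝ} (hf : Continuous f) (hi : Integrable f) (x : ℝ) :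
    HasDerivAt (fun x => ∫ y in Iic x, f y) (f x) x := by
  have h1 : (fun x => ∫ y in Iic x, f y) = fun x => (∫ y in Iic (0:ℝ), f y) + ∫ y in (0:ℝ)..x, f y := by
    ext x
    have := intervalIntegral.integral_Iic_sub_Iic (f := f) (μ := volume) (a := 0) (b := x) hi.integrableOn hi.integrableOn
    linarith
  rw [h1]
  exact (intervalIntegral.integral_hasDerivAt_right (hf.intervalIntegrable _ _) hf.stronglyMeasurable.stronglyMeasurableAtFilter hf.continuousAt).const_add _

lemma aux_Iic_bdd {f : ℝ → ℝ} (hi : Integrable f) (x : ℝ) : |∫ y in Iic x, f y| ≤ ∫ y, |f y| := by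
  refine (MeasureTheory.abs_integral_le_integral_abs).trans ?_
  exact setIntegral_le_integral hi.abs (Eventually.of_forall fun x => abs_nonneg _)

/-- `γ v` divided by `γ`, read off from the equation -/
noncomputable def ohV (γ : ℝ) (u : ℝ → ℝ → ℝ) (t x : ℝ) : ℝ :=
  (deriv (fun s => u s x) t + u t x * deriv (u t) x) / γ

section sol
variable {γ c T : ℝ} {u : ℝ → ℝ → ℝ}

lemma sol_slice (hs : IsLineOHSolution γ (Ico 0 T) u) (hc : ∀ t ∈ Ico (0:ℝ) T, ∀ x, c ≤ deriv (u t) x)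
    (t : ℝ) (ht : t ∈ Ico 0 T) : Continuous (u t) ∧ (∀ x, HasDerivAt (fun x => ∫ y in Iic x, u t y) (u t x) x) ∧
      (∀ x, HasDerivAt (u t) (deriv (u t) x) x) ∧ Integrable (fun x => u t x ^ 2) := by
  have h1 : ∀ x, HasDerivAt (u t) (deriv (u t) x) x := fun x => (hs.diff_x t ht x).hasDerivAt
  have h2 : Continuous (u t) := continuous_iff_continuousAt.2 fun x => (h1 x).continuousAt
  have h3 := aux_Iic_deriv h2 (hs.integrable t ht)
  refine ⟨h2, h3, h1, ?_⟩
  have hb := aux_u_bound h3 h1 (hc t ht) (aux_Iic_bdd (hs.integrable t ht))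
  have := (hs.integrable t ht).bdd_mul (f := u t) h2.aestronglyMeasurable (c := 2 * (∫ y, |u t y|) + |c|) (Eventually.of_forall hb)
  simpa [sq] using this

lemma sol_V (hγ : 0 < γ) (hs : IsLineOHSolution γ (Ico 0 T) u) (t : ℝ) (ht : t ∈ Ioo 0 T) :
    ohV γ u t = fun x => ∫ y in Iic x, u t y := by
  ext x
  rw [ohV, hs.eqn t ⟨ht.1.le, ht.2⟩ ht.1 x]
  field_simp

lemma sol_Vcont (hs : IsLineOHSolution γ (Ico 0 T) u) :
    ContinuousOn (fun p : ℝ × ℝ => ohV γ u p.1 p.2) (Ico 0 T ×ˢ univ) :=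
  (hs.cont_ut.add (hs.cont_u.mul hs.cont_ux)).div_const _

lemma sol_dt (hγ : 0 < γ) (hs : IsLineOHSolution γ (Ico 0 T) u) (t : ℝ) (ht : t ∈ Ico 0 T) (x : ℝ) :
    HasDerivAt (fun s => u s x) (γ * ohV γ u t x - u t x * deriv (u t) x) t := by
  refine (hs.diff_t t ht x).hasDerivAt.congr_deriv ?_
  rw [ohV]; field_simp; ring

/-- assemble, given the facts about `V` on the time interval -/
lemma sol_on_aux (hγ : 0 < γ) (hs : IsLineOHSolution γ (Ico 0 T) u)
    (hc : ∀ t ∈ Ico (0:ℝ) T, ∀ x, c ≤ deriv (u t) x)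
    (hv : ∀ t ∈ Ico (0 : ℝ) T,
        MeasureTheory.Integrable (fun x => (∫ y in Set.Iic x, u t y) ^ 2) ∧
        Filter.Tendsto (fun x => ∫ y in Set.Iic x, u t y) Filter.atTop (nhds 0) ∧
        Filter.Tendsto (fun x => ∫ y in Set.Iic x, u t y) Filter.atBot (nhds 0)) {a b : ℝ} (ha : 0 ≤ a) (hb : b < T)
    (hV : ∀ t ∈ Icc a b, ohV γ u t = fun x => ∫ y in Iic x, u t y) :
    OHOn γ c a b u (ohV γ u) (fun t x => deriv (u t) x) := by
  have hsub : Icc a b ⊆ Ico 0 T := fun t ht => ⟨ha.trans ht.1, ht.2.trans_lt hb⟩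
  have hsub2 : Icc a b ×ˢ (univ : Set ℝ) ⊆ Ico 0 T ×ˢ univ := prod_mono hsub subset_rfl
  constructor
  · exact hs.cont_u.mono hsub2
  · exact (sol_Vcont hs).mono hsub2
  · exact hs.cont_ux.mono hsub2
  · exact fun τ hτ => (sol_slice hs hc τ (hsub hτ)).2.2.1
  · intro τ hτ; rw [hV τ hτ]; exact (sol_slice hs hc τ (hsub hτ)).2.1
  · exact fun τ hτ => sol_dt hγ hs τ (hsub (Ioo_subset_Icc_self hτ))
  · exact fun τ hτ => hc τ (hsub hτ)
  · exact fun τ hτ => (sol_slice hs hc τ (hsub hτ)).2.2.2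
  · intro τ hτ; rw [hV τ hτ]; exact (hv τ (hsub hτ)).1
  · intro τ hτ; rw [hV τ hτ]; exact (hv τ (hsub hτ)).2.1
  · intro τ hτ; rw [hV τ hτ]; exact (hv τ (hsub hτ)).2.2

lemma sol_V0 (hγ : 0 < γ) (hT : 0 < T) (hs : IsLineOHSolution γ (Ico 0 T) u)
    (hc : ∀ t ∈ Ico (0:ℝ) T, ∀ x, c ≤ deriv (u t) x)
    (hv : ∀ t ∈ Ico (0 : ℝ) T,
        MeasureTheory.Integrable (fun x => (∫ y in Set.Iic x, u t y) ^ 2) ∧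
        Filter.Tendsto (fun x => ∫ y in Set.Iic x, u t y) Filter.atTop (nhds 0) ∧
        Filter.Tendsto (fun x => ∫ y in Set.Iic x, u t y) Filter.atBot (nhds 0)) :
    ohV γ u 0 = fun x => ∫ y in Iic x, u 0 y := by
  have hO : ∀ a b, 0 < a → b < T → OHOn γ c a b u (ohV γ u) (fun t x => deriv (u t) x) := fun a b ha hb =>
    sol_on_aux hγ hs hc hv ha.le hb fun t ht => sol_V hγ hs t ⟨ha.trans_le ht.1, ht.2.trans_lt hb⟩
  obtain ⟨n, hn⟩ := oh_bdd hO (T / 2) (by linarith)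
  have h0 : (0:ℝ) ∈ Ico 0 T := ⟨le_rfl, hT⟩
  have hsub2 : Icc 0 (T/2) ×ˢ (univ : Set ℝ) ⊆ Ico 0 T ×ˢ univ :=
    prod_mono (fun t ht => ⟨ht.1, by linarith [ht.2]⟩) subset_rfl
  have cV := (sol_Vcont hs).mono hsub2
  have cU := hs.cont_u.mono hsub2
  have h0' : (0:ℝ) ∈ Icc 0 (T/2) := ⟨le_rfl, by linarith⟩
  have hle : nhdsWithin (0:ℝ) (Ioc 0 (T/2)) ≤ nhdsWithin 0 (Icc 0 (T/2)) := nhdsWithin_mono _ Ioc_subset_Icc_self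
  haveI : (nhdsWithin (0:ℝ) (Ioc 0 (T/2))).NeBot := by
    rw [← mem_closure_iff_nhdsWithin_neBot, closure_Ioc (by linarith)]; exact h0'
  -- V 0 continuous in x
  have cV0 : Continuous (ohV γ u 0) := by
    have := cV.comp_continuous (f := fun x : ℝ => ((0:ℝ), x)) (by fun_prop) fun x => ⟨h0', mem_univ _⟩
    exact this
  -- differences
  have hdiff : ∀ x, ohV γ u 0 x - ohV γ u 0 0 = ∫ y in (0:ℝ)..x, u 0 y := by
    intro x
    have w1 : ∀ x, ContinuousWithinAt (fun t => ohV γ u t x) (Icc 0 (T/2)) 0 := fun x =>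
      (cV.comp (f := fun t : ℝ => (t, x)) (by fun_prop) fun t ht => ⟨ht, mem_univ _⟩) 0 h0'
    have w2 := aux_win_cont (W := u) cU 0 x 0 h0'
    have l1 := (((w1 x).sub (w1 0)).tendsto).mono_left hle
    have l2 := w2.tendsto.mono_left hle
    refine tendsto_nhds_unique (l1.congr' ?_) l2
    filter_upwards [self_mem_nhdsWithin] with t ht
    have htT : t ∈ Ioo 0 T := ⟨ht.1, by linarith [ht.2]⟩
    change ohV γ u t x - ohV γ u t 0 = _
    rw [sol_V hγ hs t htT]
    exact intervalIntegral.integral_Iic_sub_Iic (hs.integrable t ⟨ht.1.le, htT.2⟩).integrableOn (hs.integrable t ⟨ht.1.le, htT.2⟩).integrableOn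
  have hwin : ∀ R : ℝ, 0 ≤ R → ∫ x in (-R)..R, ohV γ u 0 x ^ 2 ≤ n := by
    intro R hR
    have w2 := aux_win_cont (W := fun t x => ohV γ u t x ^ 2) (cV.pow 2) (-R) R 0 h0'
    refine le_of_tendsto (w2.tendsto.mono_left hle) ?_
    filter_upwards [self_mem_nhdsWithin] with t ht
    have o := hO t (T/2) ht.1 (by linarith)
    have := aux_window_le (o.iV t ⟨le_rfl, ht.2⟩) (fun x => sq_nonneg _) (by linarith : -R ≤ R)
    have := hn t ht
    have := OHOn.Qnonneg (U := u) t
    linarith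
  set v : ℝ → ℝ := fun x => ∫ y in Iic x, u 0 y with hvdef
  set k := ohV γ u 0 0 - v 0 with hk
  have hVk : ∀ x, ohV γ u 0 x = v x + k := by
    intro x
    have h1 := hdiff x
    have h2 : v x - v 0 = ∫ y in (0:ℝ)..x, u 0 y :=
      intervalIntegral.integral_Iic_sub_Iic (hs.integrable 0 h0).integrableOn (hs.integrable 0 h0).integrableOn
    linarith
  have cv : Continuous v := by
    have : v = fun x => ohV γ u 0 x - k := by ext x; rw [hVk]; ring
    rw [this]; fun_prop
  have hkle : ∀ R : ℝ, 0 ≤ R → 2 * R * k ^ 2 ≤ 2 * n + 2 * ∫ x, v x ^ 2 := by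
    intro R hR
    have i1 : ∫ x in (-R)..R, k ^ 2 ≤ ∫ x in (-R)..R, (2 * ohV γ u 0 x ^ 2 + 2 * v x ^ 2) := by
      refine integral_mono_on (by linarith) intervalIntegrable_const ((by fun_prop : Continuous fun x => 2 * ohV γ u 0 x ^ 2 + 2 * v x ^ 2).intervalIntegrable _ _) fun x _ => ?_
      rw [hVk]; nlinarith [sq_nonneg (2 * v x + k)]
    rw [intervalIntegral.integral_add ((by fun_prop : Continuous fun x => 2 * ohV γ u 0 x ^ 2).intervalIntegrable _ _)
      ((by fun_prop : Continuous fun x => 2 * v x ^ 2).intervalIntegrable _ _), intervalIntegral.integral_const_mul,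
      intervalIntegral.integral_const_mul, intervalIntegral.integral_const, smul_eq_mul] at i1
    have := hwin R hR
    have := aux_window_le (hv 0 h0).1 (fun x => sq_nonneg _) (by linarith : -R ≤ R)
    linarith
  have hk0 : k = 0 := by
    by_contra hne
    have hpos : 0 < k ^ 2 := by positivity
    set D := 2 * n + 2 * ∫ x, v x ^ 2 with hD
    have h1 := hkle ((|D| + 1) / k ^ 2) (by positivity)
    have h2 : 2 * ((|D| + 1) / k ^ 2) * k ^ 2 = 2 * (|D| + 1) := by field_simp
    linarith [le_abs_self D, abs_nonneg D]
  ext x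
  rw [hVk, hk0, add_zero]

lemma sol_on (hγ : 0 < γ) (hs : IsLineOHSolution γ (Ico 0 T) u)
    (hc : ∀ t ∈ Ico (0:ℝ) T, ∀ x, c ≤ deriv (u t) x)
    (hv : ∀ t ∈ Ico (0 : ℝ) T,
        MeasureTheory.Integrable (fun x => (∫ y in Set.Iic x, u t y) ^ 2) ∧
        Filter.Tendsto (fun x => ∫ y in Set.Iic x, u t y) Filter.atTop (nhds 0) ∧
        Filter.Tendsto (fun x => ∫ y in Set.Iic x, u t y) Filter.atBot (nhds 0)) {b : ℝ} (hb0 : 0 ≤ b) (hb : b < T) :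
    OHOn γ c 0 b u (ohV γ u) (fun t x => deriv (u t) x) ∧
    ∃ n, ∀ t ∈ Icc 0 b, (∫ x, u t x ^ 2) + ∫ x, ohV γ u t x ^ 2 ≤ n := by
  constructor
  · refine sol_on_aux hγ hs hc hv le_rfl hb fun t ht => ?_
    rcases ht.1.eq_or_lt with rfl | h
    · exact sol_V0 hγ (hb0.trans_lt hb) hs hc hv
    · exact sol_V hγ hs t ⟨h, ht.2.trans_lt hb⟩
  · have hO : ∀ a b, 0 < a → b < T → OHOn γ c a b u (ohV γ u) (fun t x => deriv (u t) x) := fun a b ha hb =>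
      sol_on_aux hγ hs hc hv ha.le hb fun t ht => sol_V hγ hs t ⟨ha.trans_le ht.1, ht.2.trans_lt hb⟩
    obtain ⟨n, hn⟩ := oh_bdd hO b hb
    refine ⟨max n ((∫ x, u 0 x ^ 2) + ∫ x, ohV γ u 0 x ^ 2), fun t ht => ?_⟩
    rcases ht.1.eq_or_lt with rfl | h
    · exact le_max_right _ _
    · exact (hn t ⟨h, ht.2⟩).trans (le_max_left _ _)
end sol


lemma OHOn.Zbound {γ c b : ℝ} {U V Ux : ℝ → ℝ → ℝ} (hγ : 0 < γ) (h : OHOn γ c 0 b U V Ux) {n : ℝ}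
    (hn : ∀ τ ∈ Icc 0 b, (∫ x, U τ x ^ 2) + ∫ x, V τ x ^ 2 ≤ n) {Q R0 : ℝ}
    (hQ : Q = ∫ x, U 0 x ^ 2) (hQ0 : 0 < Q) (hR0 : 0 < R0) (hZ0 : γ * (∫ x, V 0 x ^ 2) + γ * Q ≤ R0 ^ 2) :
    ∀ t ∈ Icc 0 b, ∀ x, |γ * V t x| ≤ √γ / √2 * R0 + γ * Q / 3 * t := by
  intro t0 ht0
  have h00 : (0:ℝ) ∈ Icc 0 b := ⟨le_rfl, ht0.1.trans ht0.2⟩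
  set g := √γ / √2 with hg
  have hg0 : 0 < g := by positivity
  have hg2 : g ^ 2 = γ / 2 := by
    rw [hg, div_pow, Real.sq_sqrt hγ.le, Real.sq_sqrt (by norm_num)]
  set Z : ℝ → ℝ := fun t => γ * (∫ x, V t x ^ 2) + γ * Q with hZ
  have hZnn : ∀ t, 0 ≤ Z t := fun t => by
    have := OHOn.Qnonneg (U := V) t
    simp only [hZ]; positivity
  have hVZ : ∀ t ∈ Icc 0 b, ∀ x, |γ * V t x| ≤ g * √(Z t) := by
    intro t ht x
    have h1 := h.sob t ht x
    rw [h.Qconst hn ht h00, ← hQ] at h1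
    refine abs_le_of_sq_le_sq ?_ (by positivity)
    rw [mul_pow, mul_pow, hg2, Real.sq_sqrt (hZnn t)]
    simp only [hZ]
    nlinarith [mul_le_mul_of_nonneg_left h1 (sq_nonneg γ)]
  have hB : ∀ τ ∈ Icc 0 b, ∀ x, |V τ x| ≤ √n := by
    intro τ hτ x
    apply Real.abs_le_sqrt
    have := h.sob τ hτ x
    have := hn τ hτ
    nlinarith [sq_nonneg (V τ x)]
  have hlip : ∀ s ∈ Icc 0 b, ∀ t ∈ Icc 0 b, Z t ≤ Z s + |t - s| * (γ * (√n * Q)) := by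
    intro s hs t ht
    have := h.Ylip hn hs ht (B := √n) fun τ hτ => hB τ (uIcc_subset_Icc hs ht hτ)
    rw [← hQ] at this
    have := mul_le_mul_of_nonneg_left this hγ.le
    simp only [hZ]; linarith
  have hZc : ContinuousOn Z (Icc 0 b) := by
    have hK : 0 ≤ γ * (√n * Q) := by positivity
    refine (LipschitzOnWith.of_dist_le_mul (K := ⟨γ * (√n * Q), hK⟩) fun s hs t ht => ?_).continuousOn
    rw [Real.dist_eq, Real.dist_eq]
    change |Z s - Z t| ≤ γ * (√n * Q) * |s - t|
    have h1 := hlip s hs t ht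
    have h2 := hlip t ht s hs
    rw [abs_sub_comm t s] at h1
    rw [abs_le]; constructor <;> linarith
  set k := 2 / 3 * Q * g with hk
  have hk0 : 0 < k := by positivity
  have hcomp : ∀ t ∈ Icc 0 b, Z t ≤ (R0 + k * t) ^ 2 := by
    refine image_le_of_liminf_slope_right_lt_deriv_boundary (f := Z) (f' := fun t => Q * g * √(Z t))
      (B' := fun t => 2 * k * (R0 + k * t)) hZc ?_ (by simpa [hZ] using hZ0) ?_ ?_
    · intro x hx r hr
      obtain ⟨r', hr', hrr⟩ := exists_between hr
      have hxI : x ∈ Icc 0 b := Ico_subset_Icc_self hx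
      have c1 : ContinuousOn (fun t => Q * g * √(Z t)) (Icc 0 b) := continuousOn_const.mul hZc.sqrt
      have e1 : ∀ᶠ z in nhdsWithin x (Icc 0 b), Q * g * √(Z z) < r' := (c1 x hxI).eventually (gt_mem_nhds hr')
      have hr'0 : 0 < r' := lt_of_le_of_lt (by positivity) hr'
      obtain ⟨δ, hδ, hball⟩ := Metric.mem_nhdsWithin_iff.1 e1
      have e2 : ∀ᶠ z in nhdsWithin x (Ioi x), z ∈ Ioo x (min (x + δ) b) :=
        Ioo_mem_nhdsGT (lt_min (by linarith) hx.2)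
      refine Eventually.frequently (e2.mono fun z hz => ?_)
      have hzδ := lt_min_iff.1 hz.2
      have hzI : z ∈ Icc 0 b := ⟨hx.1.trans hz.1.le, hzδ.2.le⟩
      have hy := h.Ylip hn hxI hzI (B := r' / (Q * γ)) (by
        intro τ hτ y
        rw [uIcc_of_le hz.1.le] at hτ
        have hτI : τ ∈ Icc 0 b := ⟨hx.1.trans hτ.1, hτ.2.trans hzI.2⟩
        have h1 : Q * g * √(Z τ) < r' := hball ⟨by
          rw [Metric.mem_ball, Real.dist_eq, abs_lt]; constructor <;> linarith [hτ.1, hτ.2], hτI⟩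
        have h2 := hVZ τ hτI y
        rw [abs_mul, abs_of_pos hγ] at h2
        rw [le_div_iff₀ (by positivity)]
        nlinarith [mul_le_mul_of_nonneg_left h2 hQ0.le])
      rw [← hQ, abs_of_pos (by linarith [hz.1])] at hy
      have hy2 := mul_le_mul_of_nonneg_left hy hγ.le
      have e : γ * ((z - x) * (r' / (Q * γ) * Q)) = (z - x) * r' := by field_simp
      rw [slope_def_field, div_lt_iff₀ (by linarith [hz.1])]
      have : (z - x) * r' < (z - x) * r := mul_lt_mul_of_pos_left hrr (by linarith [hz.1])
      simp only [hZ]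
      linarith
    · intro x
      have := ((hasDerivAt_id x).const_mul k |>.const_add R0).fun_pow 2
      refine this.congr_deriv ?_
      simp; ring
    · intro x hx hxe
      have hpos : 0 < R0 + k * x := by
        have := mul_nonneg hk0.le hx.1
        linarith
      rw [hxe, Real.sqrt_sq hpos.le]
      apply mul_lt_mul_of_pos_right _ hpos
      rw [hk]; nlinarith [mul_pos hQ0 hg0]
  intro x
  refine (hVZ t0 ht0 x).trans ?_
  have hpos : 0 < R0 + k * t0 := by
    have := mul_nonneg hk0.le ht0.1
    linarith
  have h1 : √(Z t0) ≤ R0 + k * t0 := Real.sqrt_le_iff.2 ⟨hpos.le, hcomp t0 ht0⟩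
  refine (mul_le_mul_of_nonneg_left h1 hg0.le).trans (le_of_eq ?_)
  rw [hk]
  linear_combination (2 / 3 * Q * t0) * hg2


lemma aux_chain {F Ft Fx : ℝ → ℝ → ℝ} {a b : ℝ}
    (dt : ∀ t ∈ Ioo a b, ∀ x, HasDerivAt (fun s => F s x) (Ft t x) t)
    (dx : ∀ t ∈ Ioo a b, ∀ x, HasDerivAt (F t) (Fx t x) x)
    (cFt : ContinuousOn (fun p : ℝ × ℝ => Ft p.1 p.2) (Ioo a b ×ˢ univ))
    (cFx : ContinuousOn (fun p : ℝ × ℝ => Fx p.1 p.2) (Ioo a b ×ˢ univ))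
    {X : ℝ → ℝ} {X' t : ℝ} (ht : t ∈ Ioo a b) (hX : HasDerivAt X X' t) :
    HasDerivAt (fun s => F s (X s)) (Ft t (X t) + Fx t (X t) * X') t := by
  have hmem : Ioo a b ×ˢ (univ : Set ℝ) ∈ nhds (t, X t) :=
    (isOpen_Ioo.prod isOpen_univ).mem_nhds ⟨ht, mem_univ _⟩
  have key := hasStrictFDerivAt_uncurry_coprod (𝕜 := ℝ) (u := (t, X t)) (f := F)
    (f₁ := fun t x => ContinuousLinearMap.toSpanSingleton ℝ (Ft t x))
    (f₂ := fun t x => ContinuousLinearMap.toSpanSingleton ℝ (Fx t x))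
    (by filter_upwards [hmem] with p hp using (dt p.1 hp.1 p.2).hasFDerivAt)
    (by filter_upwards [hmem] with p hp using (dx p.1 hp.1 p.2).hasFDerivAt)
    (by
      have : ContinuousAt (fun p : ℝ × ℝ => Ft p.1 p.2) (t, X t) := cFt.continuousAt hmem
      exact (ContinuousLinearMap.toSpanSingletonCLE (𝕜 := ℝ) (E := ℝ)).continuous.continuousAt.comp this)
    (by
      have : ContinuousAt (fun p : ℝ × ℝ => Fx p.1 p.2) (t, X t) := cFx.continuousAt hmem
      exact (ContinuousLinearMap.toSpanSingletonCLE (𝕜 := ℝ) (E := ℝ)).continuous.continuousAt.comp this)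
  have h2 : HasDerivAt (fun s => (s, X s)) (1, X') t := (hasDerivAt_id t).prodMk hX
  have h3 := key.hasFDerivAt.comp_hasDerivAt t h2
  refine h3.congr_deriv ?_
  simp [Function.HasUncurry.uncurry, mul_comm]

lemma aux_ux_dt {U Ux G Gx : ℝ → ℝ → ℝ} {a b : ℝ}
    (cG : ContinuousOn (fun p : ℝ × ℝ => G p.1 p.2) (Icc a b ×ˢ univ))
    (cGx : ContinuousOn (fun p : ℝ × ℝ => Gx p.1 p.2) (Icc a b ×ˢ univ))
    (dU : ∀ t ∈ Icc a b, ∀ x, HasDerivAt (U t) (Ux t x) x)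
    (dG : ∀ t ∈ Icc a b, ∀ x, HasDerivAt (G t) (Gx t x) x)
    (dt : ∀ t ∈ Icc a b, ∀ x, HasDerivAt (fun s => U s x) (G t x) t) {t : ℝ} (ht : t ∈ Ioo a b) (x : ℝ) :
    HasDerivAt (fun s => Ux s x) (Gx t x) t := by
  have hab : a ≤ b := (ht.1.trans ht.2).le
  have ha : a ∈ Icc a b := left_mem_Icc.2 hab
  have cG' := aux_clamp_cont hab cG
  have cGx' := aux_clamp_cont hab cGx
  have h1 : ∀ s ∈ Icc a b, ∀ y, U s y = U a y + ∫ τ in a..s, G (max a (min b τ)) y := by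
    intro s hs y
    have := intervalIntegral.integral_eq_sub_of_hasDerivAt (f := fun s => U s y) (f' := fun τ => G (max a (min b τ)) y) (a := a) (b := s)
      (fun τ hτ => by
        rw [uIcc_of_le hs.1] at hτ
        have hτ' : τ ∈ Icc a b := ⟨hτ.1, hτ.2.trans hs.2⟩
        simp only [OHOn.clampEq hτ']
        exact dt τ hτ' y)
      ((cG'.comp (by fun_prop : Continuous fun τ : ℝ => (τ, y))).intervalIntegrable _ _)
    rw [this]; ring
  have h2 : ∀ s ∈ Icc a b, Ux s x = Ux a x + ∫ τ in a..s, Gx (max a (min b τ)) x := by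
    intro s hs
    have e1 := aux_param_deriv (G := fun τ => G (max a (min b τ))) (Gx := fun τ => Gx (max a (min b τ))) cG' cGx'
      (fun τ y => dG _ (OHOn.clampMem hab τ) y) a s x
    have e2 := (dU a ha x).add e1
    refine (dU s hs x).unique (e2.congr_of_eventuallyEq (Eventually.of_forall fun y => h1 s hs y))
  have cc : Continuous fun τ => Gx (max a (min b τ)) x := cGx'.comp (by fun_prop : Continuous fun τ : ℝ => (τ, x))
  have h3 := (intervalIntegral.integral_hasDerivAt_right (a := a) (b := t) (cc.intervalIntegrable _ _) cc.stronglyMeasurable.stronglyMeasurableAtFilter cc.continuousAt).const_add (Ux a x)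
  rw [OHOn.clampEq (Ioo_subset_Icc_self ht)] at h3
  refine h3.congr_of_eventuallyEq ?_
  filter_upwards [Ioo_mem_nhds ht.1 ht.2] with s hs using h2 s (Ioo_subset_Icc_self hs)

lemma aux_char {U Ux : ℝ → ℝ → ℝ} {b L : ℝ} (hb : 0 ≤ b) (hL : 0 ≤ L)
    (cU : ContinuousOn (fun p : ℝ × ℝ => U p.1 p.2) (Icc 0 b ×ˢ univ))
    (cUx : ContinuousOn (fun p : ℝ × ℝ => Ux p.1 p.2) (Icc 0 b ×ˢ univ))
    (dU : ∀ t ∈ Icc 0 b, ∀ x, HasDerivAt (U t) (Ux t x) x)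
    (hUL : ∀ t ∈ Icc 0 b, ∀ x, |U t x| ≤ L) (x₀ : ℝ) :
    ∃ X : ℝ → ℝ, X 0 = x₀ ∧ ∀ t ∈ Icc 0 b, HasDerivWithinAt X (U t (X t)) (Icc 0 b) t := by
  obtain ⟨K, hK⟩ := ((isCompact_Icc (a := (0:ℝ)) (b := b)).prod (isCompact_closedBall x₀ (L * b))).exists_bound_of_continuousOn
    (cUx.mono (prod_mono subset_rfl (subset_univ _)))
  have hp : IsPicardLindelof U (tmin := 0) (tmax := b) ⟨0, le_rfl, hb⟩ x₀ ⟨L * b, by positivity⟩ 0 ⟨L, hL⟩ (Real.toNNReal K) := by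
    constructor
    · intro t ht
      refine (convex_closedBall x₀ _).lipschitzOnWith_of_nnnorm_hasDerivWithin_le (f' := Ux t) (fun x hx => (dU t ht x).hasDerivWithinAt) fun x hx => ?_
      have := hK (t, x) ⟨ht, hx⟩
      rw [← NNReal.coe_le_coe, coe_nnnorm]
      exact this.trans (Real.le_coe_toNNReal K)
    · intro x _
      exact cU.comp (f := fun t : ℝ => (t, x)) (by fun_prop) fun t ht => ⟨ht, mem_univ _⟩
    · intro t ht x _
      exact hUL t ht x
    · simp only [sub_zero, sub_self, NNReal.coe_zero, max_eq_left hb]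
      exact le_rfl
  exact hp.exists_eq_forall_mem_Icc_hasDerivWithinAt₀

lemma aux_riccati {z z' : ℝ → ℝ} {b l ε K : ℝ} (hb : 0 ≤ b) (hl : 0 < l) (hε : 0 < ε)
    (cz : ContinuousOn z (Icc 0 b)) (dz : ∀ t ∈ Ioo 0 b, HasDerivAt z (z' t) t)
    (hz' : ∀ t ∈ Ioo 0 b, z t ^ 2 - l ^ 2 ≤ z' t) (hz0 : (1 + ε) * l ≤ z 0) (hK : ∀ t ∈ Icc 0 b, z t ≤ K) :
    ε / (2 + ε) * Real.exp (2 * l * b) * (K + l) ≤ K - l := by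
  have h00 : (0:ℝ) ∈ Icc 0 b := ⟨le_rfl, hb⟩
  have hbb : b ∈ Icc 0 b := ⟨hb, le_rfl⟩
  have hεl : 0 < ε * l := by positivity
  have hlow : ∀ t ∈ Icc 0 b, (1 + ε / 2) * l ≤ z t := by
    have e1 : ∀ᶠ s in nhdsWithin 0 (Icc 0 b), (1 + ε / 2) * l < z s :=
      (cz 0 h00).eventually (lt_mem_nhds (by linarith))
    obtain ⟨δ, hδ, hball⟩ := Metric.mem_nhdsWithin_iff.1 e1
    intro t ht
    have hnear : ∀ s ∈ Icc 0 b, s < δ → (1 + ε / 2) * l < z s := fun s hs hsδ => hball ⟨by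
      rw [Metric.mem_ball, Real.dist_eq, abs_lt]; constructor <;> linarith [hs.1], hs⟩
    rcases lt_or_ge t δ with h | h
    · exact (hnear t ht h).le
    have hs0 : 0 < δ / 2 := by positivity
    have hsub : Icc (δ/2) b ⊆ Icc 0 b := Icc_subset_Icc hs0.le le_rfl
    have := image_le_of_deriv_right_lt_deriv_boundary' (f := fun s => - z s) (f' := fun s => - z' s) (a := δ / 2) (b := b)
      (cz.mono hsub).neg
      (B := fun _ => -((1 + ε / 2) * l)) (B' := fun _ => 0) ?_ ?_ continuousOn_const (fun _ _ => hasDerivWithinAt_const _ _ _) ?_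
      (x := t) ⟨by linarith, ht.2⟩
    · linarith
    · exact fun s hs => (dz s ⟨hs0.trans_le hs.1, hs.2⟩).neg.hasDerivWithinAt
    · have := hnear (δ/2) ⟨hs0.le, by linarith [ht.2]⟩ (by linarith)
      linarith
    · intro s hs hse
      have hzs : z s = (1 + ε / 2) * l := by simpa using hse
      have := hz' s ⟨hs0.trans_le hs.1, hs.2⟩
      rw [hzs] at this
      nlinarith [mul_pos hε (mul_pos hl hl), mul_pos hεl hεl]
  have hpos : ∀ t ∈ Icc 0 b, 0 < z t - l := fun t ht => by linarith [hlow t ht]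
  have hpos' : ∀ t ∈ Icc 0 b, 0 < z t + l := fun t ht => by linarith [hlow t ht]
  set Y : ℝ → ℝ := fun t => (z t - l) / (z t + l) * Real.exp (-(2 * l * t)) with hY
  have hmono : MonotoneOn Y (Icc 0 b) := by
    have hd : ∀ t ∈ Ioo 0 b, HasDerivAt Y (((z' t) * (z t + l) - (z t - l) * z' t) / (z t + l) ^ 2 * Real.exp (-(2 * l * t))
        + (z t - l) / (z t + l) * (Real.exp (-(2 * l * t)) * (-(2 * l)))) t := by
      intro t ht
      have hne := (hpos' t (Ioo_subset_Icc_self ht)).ne'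
      have d1 := ((dz t ht).sub_const l).fun_div ((dz t ht).add_const l) hne
      have d2 : HasDerivAt (fun t => Real.exp (-(2 * l * t))) (Real.exp (-(2 * l * t)) * (-(2 * l))) t := by
        have := (((hasDerivAt_id t).const_mul (2 * l)).neg).exp
        simpa using this
      exact d1.fun_mul d2
    refine monotoneOn_of_deriv_nonneg (convex_Icc 0 b) ?_ ?_ ?_
    · refine ContinuousOn.mul ((cz.sub continuousOn_const).div (cz.add continuousOn_const) fun t ht => (hpos' t ht).ne') (by fun_prop)
    · rw [interior_Icc]; exact fun t ht => (hd t ht).differentiableAt.differentiableWithinAt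
    · rw [interior_Icc]; intro t ht
      rw [(hd t ht).deriv]
      have p1 := hpos' t (Ioo_subset_Icc_self ht)
      have e : ((z' t) * (z t + l) - (z t - l) * z' t) / (z t + l) ^ 2 * Real.exp (-(2 * l * t))
        + (z t - l) / (z t + l) * (Real.exp (-(2 * l * t)) * (-(2 * l))) =
        2 * l * (z' t - (z t ^ 2 - l ^ 2)) / (z t + l) ^ 2 * Real.exp (-(2 * l * t)) := by
        field_simp; ring
      rw [e]
      have := hz' t ht
      have : 0 ≤ z' t - (z t ^ 2 - l ^ 2) := by linarith
      positivity
  have hm := hmono h00 hbb hb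
  simp only [hY, mul_zero, neg_zero, Real.exp_zero, mul_one] at hm
  have p0 := hpos' 0 h00
  have pb := hpos' b hbb
  have hKb := hK b hbb
  have s0 : ε / (2 + ε) ≤ (z 0 - l) / (z 0 + l) := by
    rw [div_le_div_iff₀ (by positivity) p0]; nlinarith
  have s1 : (z b - l) / (z b + l) ≤ (K - l) / (K + l) := by
    rw [div_le_div_iff₀ pb (by linarith)]; nlinarith
  have s2 : ε / (2 + ε) ≤ (K - l) / (K + l) * Real.exp (-(2 * l * b)) :=
    s0.trans (hm.trans (mul_le_mul_of_nonneg_right s1 (Real.exp_pos _).le))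
  rw [Real.exp_neg, ← div_eq_mul_inv, le_div_iff₀ (Real.exp_pos _), le_div_iff₀ (by linarith)] at s2
  exact s2


lemma sol_break {γ c T : ℝ} {u : ℝ → ℝ → ℝ} (hγ : 0 < γ) (hs : IsLineOHSolution γ (Ico 0 T) u)
    (hc : ∀ t ∈ Ico (0:ℝ) T, ∀ x, c ≤ deriv (u t) x)
    (hv : ∀ t ∈ Ico (0 : ℝ) T,
        MeasureTheory.Integrable (fun x => (∫ y in Set.Iic x, u t y) ^ 2) ∧
        Filter.Tendsto (fun x => ∫ y in Set.Iic x, u t y) Filter.atTop (nhds 0) ∧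
        Filter.Tendsto (fun x => ∫ y in Set.Iic x, u t y) Filter.atBot (nhds 0)) {b : ℝ} (hb0 : 0 < b) (hb : b < T)
    {m0 C q M ε x₀ : ℝ} (hε : 0 < ε) (hq : 0 ≤ q) (hC0 : 0 ≤ C) (hm0 : ∀ x, |u 0 x| ≤ m0)
    (hVb : ∀ t ∈ Icc 0 b, ∀ x, |γ * ohV γ u t x| ≤ C + q / 3 * t)
    (hM : 0 < M) (hMb : m0 + C * b + q / 6 * b ^ 2 ≤ M) (hx₀ : deriv (u 0) x₀ ≤ -((1 + ε) * (√γ * √M))) :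
    ε / (2 + ε) * Real.exp (2 * (√γ * √M) * b) * (|c| + √γ * √M) ≤ |c| - √γ * √M := by
  obtain ⟨h, n, hn⟩ := sol_on hγ hs hc hv hb0.le hb
  have hsub : Icc 0 b ⊆ Ico 0 T := fun t ht => ⟨ht.1, ht.2.trans_lt hb⟩
  have hsub2 : Icc 0 b ×ˢ (univ : Set ℝ) ⊆ Ico 0 T ×ˢ univ := prod_mono hsub subset_rfl
  have hsub3 : Ioo 0 b ×ˢ (univ : Set ℝ) ⊆ Icc 0 b ×ˢ univ := prod_mono Ioo_subset_Icc_self subset_rfl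
  have h00 : (0:ℝ) ∈ Icc 0 b := ⟨le_rfl, hb0.le⟩
  have hB : ∀ τ ∈ Icc 0 b, ∀ x, |ohV γ u τ x| ≤ √n := by
    intro τ hτ x
    apply Real.abs_le_sqrt
    have := h.sob τ hτ x
    have := hn τ hτ
    nlinarith [sq_nonneg (ohV γ u τ x)]
  obtain ⟨X, hX0, hX⟩ := aux_char hb0.le (by positivity : 0 ≤ 2 * √n + |c|) h.cU h.cUx h.dU
    (fun t ht x => aux_u_bound (h.dV t ht) (h.dU t ht) (h.low t ht) (hB t ht) x) x₀
  have cX : ContinuousOn X (Icc 0 b) := fun t ht => (hX t ht).continuousWithinAt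
  have hX' : ∀ t ∈ Ioo 0 b, HasDerivAt X (u t (X t)) t := fun t ht =>
    (hX t (Ioo_subset_Icc_self ht)).hasDerivAt (Icc_mem_nhds ht.1 ht.2)
  have along : ∀ W : ℝ → ℝ → ℝ, ContinuousOn (fun p : ℝ × ℝ => W p.1 p.2) (Icc 0 b ×ˢ univ) →
      ContinuousOn (fun t => W t (X t)) (Icc 0 b) := fun W hW =>
    hW.comp (f := fun t : ℝ => (t, X t)) (continuousOn_id.prodMk cX) fun t ht => ⟨ht, mem_univ _⟩
  -- u along characteristics
  have hut : ∀ t ∈ Ioo 0 b, HasDerivAt (fun t => u t (X t)) (γ * ohV γ u t (X t)) t := by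
    intro t ht
    have := aux_chain (F := u) (Ft := fun t x => γ * ohV γ u t x - u t x * deriv (u t) x) (Fx := fun t x => deriv (u t) x)
      h.dt (fun t ht => h.dU t (Ioo_subset_Icc_self ht))
      (((continuousOn_const.mul h.cV).sub (h.cU.mul h.cUx)).mono hsub3) (h.cUx.mono hsub3) ht (hX' t ht)
    refine this.congr_deriv ?_
    ring
  have hbd : ∀ σ : ℝ, |σ| = 1 → ∀ t ∈ Icc 0 b, σ * u t (X t) ≤ m0 + C * t + q / 6 * t ^ 2 := by
    intro σ hσ t ht
    have hd : ∀ t ∈ Ioo 0 b, HasDerivAt (fun t => m0 + C * t + q / 6 * t ^ 2 - σ * u t (X t)) (C + q / 3 * t - σ * (γ * ohV γ u t (X t))) t := by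
      intro t ht
      have d1 : HasDerivAt (fun t => m0 + C * t + q / 6 * t ^ 2) (C + q / 3 * t) t := by
        have a1 := ((hasDerivAt_id t).const_mul C).const_add m0
        have a2 := ((hasDerivAt_id t).fun_pow 2).const_mul (q / 6)
        refine (a1.add a2).congr_deriv ?_
        simp; ring
      exact d1.fun_sub ((hut t ht).const_mul σ)
    have mono : MonotoneOn (fun t => m0 + C * t + q / 6 * t ^ 2 - σ * u t (X t)) (Icc 0 b) := by
      refine monotoneOn_of_deriv_nonneg (convex_Icc 0 b) ?_ ?_ ?_
      · exact ContinuousOn.sub (by fun_prop) (continuousOn_const.mul (along u h.cU))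
      · rw [interior_Icc]; exact fun t ht => (hd t ht).differentiableAt.differentiableWithinAt
      · rw [interior_Icc]; intro t ht
        rw [(hd t ht).deriv]
        have h1 := hVb t (Ioo_subset_Icc_self ht) (X t)
        have h2 : σ * (γ * ohV γ u t (X t)) ≤ |γ * ohV γ u t (X t)| := by
          refine (le_abs_self _).trans ?_
          rw [abs_mul, hσ, one_mul]
        linarith
    have h1 := mono h00 ht ht.1
    have h2 : σ * u 0 (X 0) ≤ m0 := by
      refine (le_abs_self _).trans ?_
      rw [abs_mul, hσ, one_mul]; exact hm0 _
    simp only [] at h1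
    norm_num at h1
    linarith
  have huM : ∀ t ∈ Icc 0 b, u t (X t) ≤ M := by
    intro t ht
    have h1 := hbd 1 (by simp) t ht
    have h2 : C * t ≤ C * b := mul_le_mul_of_nonneg_left ht.2 hC0
    have h3 : q / 6 * t ^ 2 ≤ q / 6 * b ^ 2 := mul_le_mul_of_nonneg_left (pow_le_pow_left₀ ht.1 ht.2 2) (by positivity)
    linarith
  -- slope along characteristics
  have cuxx := hs.cont_uxx.mono hsub2
  have cGx : ContinuousOn (fun p : ℝ × ℝ => γ * u p.1 p.2 - (deriv (u p.1) p.2 * deriv (u p.1) p.2 + u p.1 p.2 * deriv (deriv (u p.1)) p.2)) (Icc 0 b ×ˢ univ) :=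
    (continuousOn_const.mul h.cU).sub ((h.cUx.mul h.cUx).add (h.cU.mul cuxx))
  have hux : ∀ t ∈ Ioo 0 b, ∀ x, HasDerivAt (fun s => deriv (u s) x) (γ * u t x - (deriv (u t) x * deriv (u t) x + u t x * deriv (deriv (u t)) x)) t := by
    intro t ht x
    exact aux_ux_dt (U := u) (Ux := fun t x => deriv (u t) x) (G := fun t x => γ * ohV γ u t x - u t x * deriv (u t) x)
      (Gx := fun t x => γ * u t x - (deriv (u t) x * deriv (u t) x + u t x * deriv (deriv (u t)) x))
      ((continuousOn_const.mul h.cV).sub (h.cU.mul h.cUx)) cGx h.dU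
      (fun t ht x => ((h.dV t ht x).const_mul γ).fun_sub ((h.dU t ht x).fun_mul (hs.diff_xx t (hsub ht) x).hasDerivAt))
      (fun t ht x => sol_dt hγ hs t (hsub ht) x) ht x
  have hw : ∀ t ∈ Ioo 0 b, HasDerivAt (fun t => - deriv (u t) (X t)) (deriv (u t) (X t) ^ 2 - γ * u t (X t)) t := by
    intro t ht
    have := aux_chain (F := fun t x => deriv (u t) x) (Fx := fun t x => deriv (deriv (u t)) x)
      (Ft := fun t x => γ * u t x - (deriv (u t) x * deriv (u t) x + u t x * deriv (deriv (u t)) x))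
      hux (fun t ht x => (hs.diff_xx t (hsub (Ioo_subset_Icc_self ht)) x).hasDerivAt)
      (cGx.mono hsub3) (cuxx.mono hsub3) ht (hX' t ht)
    refine this.fun_neg.congr_deriv ?_
    ring
  have hl : 0 < √γ * √M := by positivity
  have hl2 : (√γ * √M) ^ 2 = γ * M := by rw [mul_pow, Real.sq_sqrt hγ.le, Real.sq_sqrt hM.le]
  refine aux_riccati hb0.le hl hε (along (fun t x => deriv (u t) x) h.cUx).neg hw ?_ ?_ ?_
  · intro t ht
    rw [hl2]
    have := mul_le_mul_of_nonneg_left (huM t (Ioo_subset_Icc_self ht)) hγ.le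
    change (- deriv (u t) (X t)) ^ 2 - γ * M ≤ deriv (u t) (X t) ^ 2 - γ * u t (X t)
    rw [neg_sq]
    linarith
  · change _ ≤ - deriv (u 0) (X 0)
    rw [hX0]; linarith
  · intro t ht
    have h1 := h.low t ht (X t)
    have h2 := neg_abs_le c
    change - deriv (u t) (X t) ≤ |c|
    linarith

/-- wave breaking on the line via characteristics: under the stated
smallest-root and steep-slope conditions, every decaying classical solution on the
line with initial data `u₀`, square-integrable decaying antiderivative, and `u_x`
bounded from below on `[0,T) × ℝ`, has `T < T₁`. -/
theorem line_wave_breaking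
    (γ ε : ℝ) (hγ : 0 < γ) (hε : 0 < ε)
    (u₀ : ℝ → ℝ) (hreg : ContDiff ℝ 2 u₀)
    (hu₀L1 : MeasureTheory.Integrable u₀)
    (hu₀L2 : MeasureTheory.Integrable (fun x => (u₀ x) ^ 2))
    (hu₀Linf : BddAbove (Set.range fun x => |u₀ x|))
    (Q E C : ℝ)
    (hQ : Q = ∫ x : ℝ, (u₀ x) ^ 2)
    (hE : E = ∫ x : ℝ, (γ * (∫ y in Set.Iic x, u₀ y) ^ 2 + (1/3) * (u₀ x) ^ 3))
    (hC : C = Real.sqrt γ / Real.sqrt 2 *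
      Real.sqrt (E + γ * Q + (1/3) * Q * (⨆ y : ℝ, |u₀ y|)))
    (T₁ : ℝ) (hT₁pos : 0 < T₁)
    (hroot : 2 * Real.sqrt γ * T₁ *
        Real.sqrt ((⨆ y : ℝ, |u₀ y|) + C * T₁ + γ * Q / 6 * T₁ ^ 2)
      = Real.log (1 + 2 / ε))
    (hsmallest : ∀ T' : ℝ, 0 < T' →
      2 * Real.sqrt γ * T' *
          Real.sqrt ((⨆ y : ℝ, |u₀ y|) + C * T' + γ * Q / 6 * T' ^ 2)
        = Real.log (1 + 2 / ε) → T₁ ≤ T')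
    (x₀ : ℝ)
    (hslope : deriv u₀ x₀ ≤ -(1 + ε) * Real.sqrt γ *
      Real.sqrt ((⨆ y : ℝ, |u₀ y|) + C * T₁ + γ * Q / 6 * T₁ ^ 2)) :
    ∀ (T : ℝ) (u : ℝ → ℝ → ℝ),
      IsLineOHSolution γ (Set.Ico 0 T) u →
      u 0 = u₀ →
      (∀ t ∈ Set.Ico (0 : ℝ) T,
        MeasureTheory.Integrable (fun x => (∫ y in Set.Iic x, u t y) ^ 2) ∧
        Filter.Tendsto (fun x => ∫ y in Set.Iic x, u t y) Filter.atTop (nhds 0) ∧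
        Filter.Tendsto (fun x => ∫ y in Set.Iic x, u t y) Filter.atBot (nhds 0)) →
      (∃ c : ℝ, ∀ t ∈ Set.Ico (0 : ℝ) T, ∀ x : ℝ, c ≤ deriv (u t) x) →
      T < T₁ := by
  intro T u hs hu0 hv ⟨c, hc⟩
  by_contra hT
  push Not at hT
  have hT0 : 0 < T := hT₁pos.trans_le hT
  set m0 := ⨆ y : ℝ, |u₀ y| with hm0def
  have hm0 : ∀ x, |u₀ x| ≤ m0 := fun x => le_ciSup hu₀Linf x
  have hm00 : 0 ≤ m0 := (abs_nonneg _).trans (hm0 0)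
  have hQnn : 0 ≤ Q := by rw [hQ]; exact integral_nonneg fun x => sq_nonneg _
  have hCnn : 0 ≤ C := by rw [hC]; positivity
  set M := m0 + C * T₁ + γ * Q / 6 * T₁ ^ 2 with hMdef
  have hlog : 0 < Real.log (1 + 2 / ε) := Real.log_pos (by
    have : 0 < 2 / ε := by positivity
    linarith)
  have hM : 0 < M := by
    by_contra hneg
    rw [Real.sqrt_eq_zero_of_nonpos (not_lt.1 hneg), mul_zero] at hroot
    linarith
  have h00 : (0:ℝ) ∈ Ico 0 T := ⟨le_rfl, hT0⟩
  have hcont : Continuous u₀ := hreg.continuous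
  have hiv : Integrable fun x => (∫ y in Iic x, u₀ y) ^ 2 := by
    have := (hv 0 h00).1
    rwa [hu0] at this
  have hi3 : Integrable fun x => u₀ x ^ 3 := by
    have := hu₀L2.bdd_mul (f := u₀) hcont.aestronglyMeasurable (c := m0) (Eventually.of_forall hm0)
    refine this.congr (Eventually.of_forall fun x => ?_)
    simp only; ring
  have hE2 : E = γ * (∫ x, (∫ y in Iic x, u₀ y) ^ 2) + (1/3) * ∫ x, u₀ x ^ 3 := by
    rw [hE, MeasureTheory.integral_add (hiv.const_mul γ) (hi3.const_mul (1/3)), MeasureTheory.integral_const_mul,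
      MeasureTheory.integral_const_mul]
  have h3 : -(m0 * Q) ≤ ∫ x, u₀ x ^ 3 := by
    rw [hQ, ← MeasureTheory.integral_const_mul, ← MeasureTheory.integral_neg]
    refine integral_mono (hu₀L2.const_mul m0).neg hi3 fun x => ?_
    have := (abs_le.1 (hm0 x)).1
    nlinarith [mul_nonneg (by linarith : 0 ≤ m0 + u₀ x) (sq_nonneg (u₀ x))]
  have hQ0 : 0 < Q := by
    rcases hQnn.lt_or_eq with h | h
    · exact h
    exfalso
    have hae : (fun x => u₀ x ^ 2) =ᵐ[volume] 0 :=
      (integral_eq_zero_iff_of_nonneg (fun x => sq_nonneg _) hu₀L2).1 (by rw [← hQ, ← h])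
    have heq : (fun x => u₀ x ^ 2) = 0 := ((hcont.pow 2).ae_eq_iff_eq volume continuous_zero).1 hae
    have hz : ∀ x, u₀ x = 0 := fun x => by
      have := congrFun heq x
      simpa using this
    have hm : m0 = 0 := by rw [hm0def]; simp [hz]
    have hE0 : E = 0 := by rw [hE2]; simp [hz]
    have hC0 : C = 0 := by rw [hC, hE0, ← h]; simp
    have : M = 0 := by rw [hMdef, hm, hC0, ← h]; simp
    linarith
  set R0 := √(E + γ * Q + 1/3 * Q * m0) with hR0
  have hZ : γ * (∫ x, (∫ y in Iic x, u₀ y) ^ 2) + γ * Q ≤ E + γ * Q + 1/3 * Q * m0 := by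
    rw [hE2]; linarith
  have hvnn : 0 ≤ γ * ∫ x, (∫ y in Iic x, u₀ y) ^ 2 := mul_nonneg hγ.le (integral_nonneg fun x => sq_nonneg _)
  have hγQ : 0 < γ * Q := by positivity
  have hR0pos : 0 < R0 := Real.sqrt_pos.2 (by linarith)
  have hR0sq : R0 ^ 2 = E + γ * Q + 1/3 * Q * m0 := Real.sq_sqrt (by linarith)
  have key : ∀ b ∈ Ioo 0 T₁, ε / (2 + ε) * Real.exp (2 * (√γ * √M) * b) * (|c| + √γ * √M) ≤ |c| - √γ * √M := by
    intro b hb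
    have hbT : b < T := hb.2.trans_le hT
    obtain ⟨h, n, hn⟩ := sol_on hγ hs hc hv hb.1.le hbT
    have hVb := h.Zbound hγ hn (Q := Q) (R0 := R0) (by rw [hQ, hu0]) hQ0 hR0pos (by
      rw [hR0sq, sol_V0 hγ hT0 hs hc hv, hu0]; exact hZ)
    rw [← hC] at hVb
    refine sol_break hγ hs hc hv hb.1 hbT (m0 := m0) (C := C) (q := γ * Q) (x₀ := x₀) hε hγQ.le hCnn (by rw [hu0]; exact hm0) hVb hM ?_ ?_
    · have h2 : C * b ≤ C * T₁ := mul_le_mul_of_nonneg_left hb.2.le hCnn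
      have h3 : γ * Q / 6 * b ^ 2 ≤ γ * Q / 6 * T₁ ^ 2 :=
        mul_le_mul_of_nonneg_left (pow_le_pow_left₀ hb.1.le hb.2.le 2) (by positivity)
      rw [hMdef]; linarith
    · rw [hu0]; linarith
  have hlim : ε / (2 + ε) * Real.exp (2 * (√γ * √M) * T₁) * (|c| + √γ * √M) ≤ |c| - √γ * √M := by
    have ct : Continuous fun b : ℝ => ε / (2 + ε) * Real.exp (2 * (√γ * √M) * b) * (|c| + √γ * √M) := by fun_prop
    refine le_of_tendsto ((ct.tendsto T₁).mono_left (nhdsWithin_le_nhds (s := Iio T₁))) ?_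
    filter_upwards [Ioo_mem_nhdsLT hT₁pos] with b hb using key b hb
  have hexp : Real.exp (2 * (√γ * √M) * T₁) = 1 + 2 / ε := by
    rw [show 2 * (√γ * √M) * T₁ = 2 * √γ * T₁ * √M by ring, hroot, Real.exp_log (by positivity)]
  rw [hexp, show ε / (2 + ε) * (1 + 2 / ε) = 1 by field_simp; ring] at hlim
  have : 0 < √γ * √M := by positivity
  linarith
end

section
/- Let γ > 0 and c ∈ ℝ. There is no nontrivial twice continuously differentiable function φ : ℝ → ℝ with lim_{|x|→∞} φ(x) = 0 and lim_{|x|→∞} φ'(x) = 0 that satisfies the traveling-wave equation (c − φ(x)) φ''(x) = (φ'(x))² − γ φ(x) for all x ∈ ℝ; that is, any such solution is identically zero. -/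
open Filter

/-- no nontrivial localized traveling wave: any `C²` solution `φ` of
`(c - φ) φ'' = (φ')² - γ φ` on `ℝ` with `φ, φ' → 0` as `|x| → ∞` is identically zero. -/
theorem no_localized_traveling_wave
    (γ c : ℝ) (hγ : 0 < γ) (φ : ℝ → ℝ) (hφ : ContDiff ℝ 2 φ)
    (hdecay_top : Filter.Tendsto φ Filter.atTop (nhds 0))
    (hdecay_bot : Filter.Tendsto φ Filter.atBot (nhds 0))
    (hdecay_top' : Filter.Tendsto (deriv φ) Filter.atTop (nhds 0))
    (hdecay_bot' : Filter.Tendsto (deriv φ) Filter.atBot (nhds 0))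
    (heq : ∀ x : ℝ, (c - φ x) * deriv (deriv φ) x = (deriv φ x) ^ 2 - γ * φ x) :
    ∀ x : ℝ, φ x = 0 := by
  have hd1 : ∀ x, HasDerivAt φ (deriv φ x) x := fun x =>
    ((hφ.differentiable (by norm_num)) x).hasDerivAt
  have hc1 : ContDiff ℝ 1 (deriv φ) := by
    have h2 : ContDiff ℝ (1 + 1) φ := by
      convert hφ using 1
      norm_num
    exact (contDiff_succ_iff_deriv.1 h2).2.2
  have hd2 : ∀ x, HasDerivAt (deriv φ) (deriv (deriv φ) x) x := fun x =>
    ((hc1.differentiable (by norm_num)) x).hasDerivAt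
  have hcont : Continuous φ := hφ.continuous
  -- the first integral
  let E : ℝ → ℝ := fun x =>
    ((c - φ x) * deriv φ x) ^ 2 / 2 + γ * (c * φ x ^ 2 / 2 - φ x ^ 3 / 3)
  have hE' : ∀ x, HasDerivAt E 0 x := by
    intro x
    have h1 := ((((hd1 x).const_sub c).mul (hd2 x)).pow 2).div_const 2
    have h2 := (((((hd1 x).pow 2).const_mul c).div_const 2).sub
      (((hd1 x).pow 3).div_const 3)).const_mul γ
    have h3 := h1.add h2
    have h4 : HasDerivAt E _ x := h3
    refine h4.congr_deriv ?_
    have := heq x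
    simp only [Pi.mul_apply]
    push_cast
    linear_combination ((c - φ x) * deriv φ x) * this
  have hEc : ∀ x y, E x = E y := is_const_of_deriv_eq_zero
    (fun x => (hE' x).differentiableAt) (fun x => (hE' x).deriv)
  have hElim : Tendsto E atTop (nhds 0) := by
    have h := ((((hdecay_top.const_sub c).mul hdecay_top').pow 2).div_const 2).add
      (((((hdecay_top.pow 2).const_mul c).div_const 2).sub
      ((hdecay_top.pow 3).div_const 3)).const_mul γ)
    simpa using h
  have hE0 : ∀ x, E x = 0 := by
    intro x
    have : E = fun _ => E x := funext fun y => hEc y x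
    rw [this] at hElim
    exact tendsto_nhds_unique tendsto_const_nhds hElim
  by_contra! hne
  obtain ⟨a, ha⟩ := hne
  have hco : Tendsto φ (cocompact ℝ) (nhds 0) := by
    rw [cocompact_eq_atBot_atTop]
    exact hdecay_bot.sup hdecay_top
  have hsq : Tendsto (fun x => φ x ^ 2) (cocompact ℝ) (nhds 0) := by
    simpa using hco.pow 2
  have hapos : 0 < φ a ^ 2 := by positivity
  obtain ⟨m, hm⟩ := (hcont.pow 2).exists_forall_ge' a
    ((hsq.eventually (gt_mem_nhds hapos)).mono fun x hx => le_of_lt hx)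
  have hm0 : φ m ≠ 0 := by
    intro h
    have := hm a
    simp only [Pi.pow_apply, h] at this
    linarith
  have hdm : deriv φ m = 0 := by
    have hmax : IsLocalMax (fun x => φ x ^ 2) m := Eventually.of_forall hm
    have h := hmax.hasDerivAt_eq_zero ((hd1 m).pow 2)
    simpa [hm0] using h
  have hval : φ m = 3 * c / 2 := by
    have h := hE0 m
    simp only [E, hdm] at h
    have h' : (γ * φ m ^ 2) * (c / 2 - φ m / 3) = 0 := by linear_combination h
    have h'' : γ * φ m ^ 2 ≠ 0 := by positivity
    have := (mul_eq_zero.1 h').resolve_left h''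
    linarith
  have hc0 : c ≠ 0 := by
    rintro rfl
    apply hm0
    rw [hval]
    norm_num
  have hatt : ∃ y, φ y = c := by
    rcases lt_or_gt_of_ne hc0 with h | h
    · obtain ⟨b, hb⟩ := (hdecay_top.eventually (lt_mem_nhds h)).exists
      exact mem_range_of_exists_le_of_exists_ge hcont ⟨m, by linarith⟩ ⟨b, hb.le⟩
    · obtain ⟨b, hb⟩ := (hdecay_top.eventually (gt_mem_nhds h)).exists
      exact mem_range_of_exists_le_of_exists_ge hcont ⟨b, hb.le⟩ ⟨m, by linarith⟩
  obtain ⟨y, hy⟩ := hatt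
  have h := hE0 y
  simp only [E, hy] at h
  have h' : γ * c ^ 3 = 0 := by linear_combination 6 * h
  have : γ * c ^ 3 ≠ 0 := by positivity
  exact this h'
end

section
/- Let h > 0, ε > 0, and set T₁ = (1/(2h)) log(1 + 2/ε). Suppose T > 0 and V : [0,T) → ℝ is differentiable with V'(t) ≤ −V(t)² + h² for all t ∈ (0,T) and V(0) ≤ −(1+ε) h. Then V(t) ≤ V₊(t) < 0 for all t ∈ [0,T), where V₊ is the solution of V₊' = −V₊² + h², V₊(0) = −(1+ε)h, which satisfies lim_{t↑T₁} V₊(t) = −∞; consequently T ≤ T₁. -/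
open Filter

/-- Riccati comparison: if `V' ≤ -V² + h²` on `(0,T)` and
`V(0) ≤ -(1+ε)h`, then `V ≤ V₊ < 0` on `[0,T)` where `V₊` solves
`V₊' = -V₊² + h²`, `V₊(0) = -(1+ε)h`, `V₊ → -∞` as `t ↑ T₁ = (1/(2h)) log(1+2/ε)`;
consequently `T ≤ T₁`. -/
theorem riccati_comparison_blowup
    (h ε T : ℝ) (hh : 0 < h) (hε : 0 < ε) (hT : 0 < T)
    (T₁ : ℝ) (hT₁ : T₁ = 1 / (2 * h) * Real.log (1 + 2 / ε))
    (V : ℝ → ℝ)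
    (hdiff : ∀ t ∈ Set.Ico (0 : ℝ) T, DifferentiableAt ℝ V t)
    (hineq : ∀ t ∈ Set.Ioo (0 : ℝ) T, deriv V t ≤ -(V t) ^ 2 + h ^ 2)
    (hV0 : V 0 ≤ -(1 + ε) * h) :
    ∃ Vp : ℝ → ℝ,
      Vp 0 = -(1 + ε) * h ∧
      (∀ t ∈ Set.Ico (0 : ℝ) T₁, HasDerivAt Vp (-(Vp t) ^ 2 + h ^ 2) t) ∧
      Filter.Tendsto Vp (nhdsWithin T₁ (Set.Iio T₁)) Filter.atBot ∧
      T ≤ T₁ ∧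
      ∀ t ∈ Set.Ico (0 : ℝ) T, V t ≤ Vp t ∧ Vp t < 0 := by
  obtain ⟨D, hD⟩ : ∃ D : ℝ → ℝ, D = fun t =>
    ((2 + ε) * Real.exp (-(h * t)) - ε * Real.exp (h * t)) / 2 := ⟨_, rfl⟩
  obtain ⟨N, hN⟩ : ∃ N : ℝ → ℝ, N = fun t =>
    -h * ((2 + ε) * Real.exp (-(h * t)) + ε * Real.exp (h * t)) / 2 := ⟨_, rfl⟩
  have e1 : ∀ t, HasDerivAt (fun t => Real.exp (h * t)) (Real.exp (h * t) * h) t := by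
    intro t
    simpa using ((hasDerivAt_id t).const_mul h).exp
  have e2 : ∀ t, HasDerivAt (fun t => Real.exp (-(h * t))) (Real.exp (-(h * t)) * (-h)) t := by
    intro t
    simpa using (((hasDerivAt_id t).const_mul h).neg).exp
  have dD : ∀ t, HasDerivAt D (N t) t := by
    intro t
    rw [hD, hN]
    refine ((((e2 t).const_mul (2 + ε)).sub ((e1 t).const_mul ε)).div_const 2).congr_deriv ?_
    ring
  have dN : ∀ t, HasDerivAt N (h ^ 2 * D t) t := by
    intro t
    rw [hD, hN]
    refine (((((e2 t).const_mul (2 + ε)).add ((e1 t).const_mul ε)).const_mul (-h)).div_const 2).congr_deriv ?_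
    ring
  have hNneg : ∀ t, N t < 0 := by
    intro t
    have : 0 < h * ((2 + ε) * Real.exp (-(h * t)) + ε * Real.exp (h * t)) / 2 := by positivity
    rw [hN]
    simp only
    linarith
  have hD0 : D 0 = 1 := by simp [hD]
  have hN0 : N 0 = -(1 + ε) * h := by
    simp [hN]
    ring
  have hanti : StrictAnti D := strictAnti_of_hasDerivAt_neg dD hNneg
  have hDT : D T₁ = 0 := by
    have hx : Real.exp (h * T₁) * Real.exp (h * T₁) = 1 + 2 / ε := by
      rw [← Real.exp_add]
      have : h * T₁ + h * T₁ = Real.log (1 + 2 / ε) := by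
        rw [hT₁]
        field_simp
        ring
      rw [this, Real.exp_log (by positivity)]
    have hp := Real.exp_pos (h * T₁)
    rw [hD]
    simp only [Real.exp_neg]
    field_simp
    rw [pow_two, hx]
    field_simp
    ring
  have hDpos : ∀ t, t < T₁ → 0 < D t := fun t ht => hDT ▸ hanti ht
  have hT₁pos : 0 < T₁ := by
    rw [← hanti.lt_iff_gt, hDT, hD0]
    norm_num
  have key : ∀ s, 0 ≤ s → s < T → s ≤ T₁ → V s * D s - N s ≤ 0 := by
    intro s hs0 hsT hs1
    have hVc : ContinuousOn V (Set.Icc 0 s) := fun t ht =>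
      (hdiff t ⟨ht.1, ht.2.trans_lt hsT⟩).continuousAt.continuousWithinAt
    obtain ⟨K, hK⟩ := isCompact_Icc.exists_bound_of_continuousOn hVc
    have hd : ∀ t ∈ Set.Icc 0 s, HasDerivAt (fun t => V t * D t - N t)
        (deriv V t * D t + V t * N t - h ^ 2 * D t) t := fun t ht =>
      (((hdiff t ⟨ht.1, ht.2.trans_lt hsT⟩).hasDerivAt.mul (dD t)).sub (dN t))
    have main : ∀ δ > 0, V s * D s - N s ≤ δ * Real.exp ((K + 1) * s) := by
      intro δ hδ
      have hB : ∀ x, HasDerivAt (fun x => δ * Real.exp ((K + 1) * x))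
          (δ * (Real.exp ((K + 1) * x) * (K + 1))) x := by
        intro x
        simpa using (((hasDerivAt_id x).const_mul (K + 1)).exp).const_mul δ
      have h0 : V 0 * D 0 - N 0 ≤ 0 := by
        rw [hD0, hN0]
        linarith
      refine image_le_of_deriv_right_lt_deriv_boundary
        (f := fun t => V t * D t - N t)
        (f' := fun t => deriv V t * D t + V t * N t - h ^ 2 * D t)
        (B := fun x => δ * Real.exp ((K + 1) * x))
        (fun t ht => (hd t ht).continuousAt.continuousWithinAt)
        (fun t ht => (hd t ⟨ht.1, ht.2.le⟩).hasDerivWithinAt) ?_ hB ?_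
        (Set.right_mem_Icc.2 hs0)
      · simp only [mul_zero, Real.exp_zero]
        linarith
      · intro x hx hxe
        have hbp : 0 < δ * Real.exp ((K + 1) * x) := by positivity
        rcases hx.1.eq_or_lt with h1 | h1
        · rw [← h1] at hxe hbp
          linarith
        · have hi := hineq x ⟨h1, hx.2.trans hsT⟩
          have hDx := hDpos x (hx.2.trans_le hs1)
          have hk := hK x ⟨hx.1, hx.2.le⟩
          rw [Real.norm_eq_abs] at hk
          have hk' := (abs_le.1 hk).1
          have a1 := mul_le_mul_of_nonneg_right hi hDx.le
          have a2 := mul_le_mul_of_nonneg_right hk' hbp.le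
          have a3 : V x * (V x * D x - N x) = V x * (δ * Real.exp ((K + 1) * x)) := by rw [hxe]
          nlinarith
    by_contra hcon
    push Not at hcon
    have hE := Real.exp_pos ((K + 1) * s)
    have := main ((V s * D s - N s) / (2 * Real.exp ((K + 1) * s))) (by positivity)
    have h2 : (V s * D s - N s) / (2 * Real.exp ((K + 1) * s)) * Real.exp ((K + 1) * s)
        = (V s * D s - N s) / 2 := by field_simp
    linarith
  have hTT : T ≤ T₁ := by
    by_contra hcon
    push Not at hcon
    have := key T₁ hT₁pos.le hcon le_rfl
    rw [hDT] at this
    linarith [hNneg T₁]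
  refine ⟨fun t => N t / D t, ?_, ?_, ?_, hTT, ?_⟩
  · simp [hD0, hN0]
  · intro t ht
    have hp := hDpos t ht.2
    refine ((dN t).div (dD t) hp.ne').congr_deriv ?_
    field_simp
    ring
  · have l1 : Tendsto N (nhdsWithin T₁ (Set.Iio T₁)) (nhds (N T₁)) :=
      (dN T₁).continuousAt.tendsto.mono_left nhdsWithin_le_nhds
    have l2 : Tendsto D (nhdsWithin T₁ (Set.Iio T₁)) (nhdsWithin 0 (Set.Ioi 0)) := by
      refine tendsto_nhdsWithin_iff.2 ⟨?_, ?_⟩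
      · have := (dD T₁).continuousAt.tendsto.mono_left
          (nhdsWithin_le_nhds (s := Set.Iio T₁))
        rwa [hDT] at this
      · filter_upwards [self_mem_nhdsWithin] with t ht
        exact hDpos t ht
    simp only [div_eq_mul_inv]
    exact l1.neg_mul_atTop (hNneg T₁) (tendsto_inv_nhdsGT_zero.comp l2)
  · intro t ht
    have hp := hDpos t (ht.2.trans_le hTT)
    refine ⟨?_, div_neg_of_neg_of_pos (hNneg t) hp⟩
    rw [le_div_iff₀ hp]
    linarith [key t ht.1 ht.2 (ht.2.le.trans hTT)]
end
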